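/- arXiv:1001.3923 — 2 statements merged into one kernel-verified Lean document; each statement's English description precedes it below -/
import Mathlib

section
/- Let n ≥ 2, let G ⊊ ℝⁿ be a nonempty open connected proper subset, let x ∈ G and let 0 < r ≤ log(1+√3). Then the j-metric ball B_j(x,r) is close-to-convex. -/
/-- A half-line in a real vector space: `{z + t • y : t > 0}` or `{z + t • y : t ≥ 0}`
for some point `z` and nonzero direction `y`. -/
def IsHalfLine {E : Type*} [AddCommGroup E] [Module ℝ E] (S : Set E) : Prop :=
  ∃ z y : E, y ≠ 0 ∧
    (S = {x | ∃ t : ℝ, 0 < t ∧ x = z + t • y} ∨ S = {x | ∃ t : ℝ, 0 ≤ t ∧ x = z + t • y})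

/-- A set `G` is close-to-convex if its complement is the union of a family of
pairwise disjoint half-lines. -/
def CloseToConvex {E : Type*} [AddCommGroup E] [Module ℝ E] (G : Set E) : Prop :=
  ∃ 𝒞 : Set (Set E), (∀ S ∈ 𝒞, IsHalfLine S) ∧ 𝒞.Pairwise Disjoint ∧ ⋃₀ 𝒞 = Gᶜ

/-- The distance ratio metric (`j`-metric) of a domain `G`:
`j_G(x,y) = log (1 + |x-y| / min (d(x), d(y)))` where `d` is the distance to `∂G`. -/
noncomputable def jDist {E : Type*} [NormedAddCommGroup E] (G : Set E) (x y : E) : ℝ :=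
  Real.log (1 + dist x y / min (Metric.infDist x (frontier G)) (Metric.infDist y (frontier G)))

/-- The `j`-metric ball `B_j(x,r) = {y ∈ G : j_G(x,y) < r}`. -/
def jBall {E : Type*} [NormedAddCommGroup E] (G : Set E) (x : E) (r : ℝ) : Set E :=
  {y ∈ G | jDist G x y < r}

/-!
With `R = exp r - 1 ≤ √3` and `Z = frontier G`, the ball `B` consists of the points `y` with
`dist y x < R * infDist x Z` and `dist y x < R * infDist y Z`. For `R ≤ 1` it is star-shaped about
`x`, and rays from `x` cover its complement.

Let `1 < R`. In dimension at least three, each point outside `B` starts rays that avoid `B` in a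
nonempty open set of directions. Hence the half-lines can be chosen by transfinite recursion: fewer
than continuum many half-lines, each spanning a plane with the given point, cannot block all these
directions.

In the plane, let `M` be the closed convex hull of `B`. Inside the ball of radius `R * infDist x Z`
the complement of `B` is the union of the closed Apollonian discs
`{y | R * dist y z ≤ dist y x}`, `z ∈ Z`, whose centres lie outside the interior of `M` because
`R ^ 2 ≤ 3`. Move a point outside `M` away from its nearest point of `M`, and a point `y` of `M`
in the direction `u` of the outer normal of `M` where the disc having minimal power at `y` leaves
`M`. Along such a motion the minimizing discs have their centres further and further out in
direction `u`, so they leave `M` with the same normal `u`. The direction is thus constant along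
trajectories, and the trajectories are pairwise disjoint half-lines.
-/

open Set Metric Module EuclideanGeometry
open scoped RealInnerProductSpace Cardinal

/-! ### Half-lines and trajectories -/

section HalfLine

variable {E : Type*} [AddCommGroup E] [Module ℝ E] {G : Set E}

theorem exists_eq_Ici_or_eq_Ioi_of_isUpperSet {α : Type*} [ConditionallyCompleteLinearOrder α]
    {T : Set α} (hT : IsUpperSet T) (hne : T.Nonempty) (hbdd : BddBelow T) :
    ∃ a, T = Ici a ∨ T = Ioi a := by
  have hsub : T ⊆ Ici (sInf T) := fun t ht => csInf_le hbdd ht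
  have hsup : Ioi (sInf T) ⊆ T := fun t ht =>
    have ⟨_, hs, hst⟩ := exists_lt_of_csInf_lt hne ht
    hT hst.le hs
  refine ⟨sInf T, ?_⟩
  by_cases hmem : sInf T ∈ T
  · exact .inl (hsub.antisymm fun t ht => hT ht hmem)
  · exact .inr (Subset.antisymm (fun t ht => (hsub ht).lt_of_ne fun h => hmem (h ▸ ht)) hsup)

theorem isHalfLine_image_of_isUpperSet {T : Set ℝ} (hT : IsUpperSet T) (hne : T.Nonempty)
    (hbdd : BddBelow T) (z : E) {y : E} (hy : y ≠ 0) :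
    IsHalfLine ((fun t : ℝ => z + t • y) '' T) := by
  obtain ⟨a, rfl | rfl⟩ := exists_eq_Ici_or_eq_Ioi_of_isUpperSet hT hne hbdd
  · refine ⟨z + a • y, y, hy, .inr <| Set.ext fun v => ⟨?_, ?_⟩⟩
    · rintro ⟨t, ht, rfl⟩
      exact ⟨t - a, sub_nonneg.2 ht, by module⟩
    · rintro ⟨t, ht, rfl⟩
      exact ⟨a + t, le_add_of_nonneg_right ht, by module⟩
  · refine ⟨z + a • y, y, hy, .inl <| Set.ext fun v => ⟨?_, ?_⟩⟩
    · rintro ⟨t, ht, rfl⟩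
      exact ⟨t - a, sub_pos.2 ht, by module⟩
    · rintro ⟨t, ht, rfl⟩
      exact ⟨a + t, lt_add_of_pos_right a ht, by module⟩

/-- The trajectory of `y` in a direction field `dir` on the complement of `G`: the points outside
`G` on the line through `y` in the direction `dir y` at which the field has the value `dir y`. -/
def trajectory (G : Set E) (dir : E → E) (y : E) : Set E :=
  {w | w ∉ G ∧ dir w = dir y ∧ ∃ t : ℝ, y + t • dir y = w}

theorem mem_trajectory_self {dir : E → E} {y : E} (hy : y ∉ G) : y ∈ trajectory G dir y :=
  ⟨hy, rfl, 0, by simp⟩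

theorem trajectory_eq_of_mem {dir : E → E} {y w : E} (hw : w ∈ trajectory G dir y) :
    trajectory G dir w = trajectory G dir y := by
  obtain ⟨-, hdir, t, rfl⟩ := hw
  ext v
  simp only [trajectory, hdir, mem_ofPred_eq]
  refine and_congr_right' (and_congr_right' ⟨?_, ?_⟩)
  · rintro ⟨s, rfl⟩
    exact ⟨t + s, by module⟩
  · rintro ⟨s, rfl⟩
    exact ⟨s - t, by module⟩

theorem isHalfLine_trajectory {dir : E → E} {y : E} (hy : y ∉ G) (hne : dir y ≠ 0)
    (hforward : ∀ w ∉ G, ∀ t : ℝ, 0 < t → w + t • dir w ∉ G ∧ dir (w + t • dir w) = dir w)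
    (hback : ∃ t : ℝ, ¬ (y + t • dir y ∉ G ∧ dir (y + t • dir y) = dir y)) :
    IsHalfLine (trajectory G dir y) := by
  let T : Set ℝ := {t | y + t • dir y ∉ G ∧ dir (y + t • dir y) = dir y}
  have himage : trajectory G dir y = (fun t : ℝ => y + t • dir y) '' T := by
    ext w
    constructor
    · rintro ⟨hw, hdir, t, rfl⟩
      exact ⟨t, ⟨hw, hdir⟩, rfl⟩
    · rintro ⟨t, ht, rfl⟩
      exact ⟨ht.1, ht.2, t, rfl⟩
  have hupper : IsUpperSet T := by
    intro s t hst hs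
    rcases hst.eq_or_lt with rfl | hst
    · exact hs
    · have h := hforward _ hs.1 (t - s) (sub_pos.2 hst)
      have hpoint : y + s • dir y + (t - s) • dir y = y + t • dir y := by module
      rwa [hs.2, hpoint] at h
  obtain ⟨t₀, ht₀⟩ := hback
  have hbdd : BddBelow T := ⟨t₀, fun t ht => not_lt.1 fun hlt => ht₀ (hupper hlt.le ht)⟩
  rw [himage]
  exact isHalfLine_image_of_isUpperSet hupper ⟨0, by simpa [T] using hy⟩ hbdd y hne

theorem closeToConvex_of_invariant_direction {dir : E → E} (hne : ∀ y ∉ G, dir y ≠ 0)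
    (hforward : ∀ y ∉ G, ∀ t : ℝ, 0 < t → y + t • dir y ∉ G ∧ dir (y + t • dir y) = dir y)
    (hback : ∀ y ∉ G, ∃ t : ℝ, ¬ (y + t • dir y ∉ G ∧ dir (y + t • dir y) = dir y)) :
    CloseToConvex G := by
  refine ⟨trajectory G dir '' Gᶜ, ?_, ?_, ?_⟩
  · rintro _ ⟨y, hy, rfl⟩
    exact isHalfLine_trajectory hy (hne y hy) hforward (hback y hy)
  · rintro _ ⟨y, -, rfl⟩ _ ⟨y', -, rfl⟩ hyy'
    exact Set.disjoint_left.2 fun w hw hw' =>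
      hyy' ((trajectory_eq_of_mem hw).symm.trans (trajectory_eq_of_mem hw'))
  · refine Subset.antisymm (sUnion_subset ?_) fun w hw =>
      ⟨_, mem_image_of_mem _ hw, mem_trajectory_self hw⟩
    rintro _ ⟨y, -, rfl⟩ w hw
    exact hw.1

theorem closeToConvex_of_invariant_relation (IsDirection : E → E → Prop)
    (hexists : ∀ y ∉ G, ∃ u, IsDirection y u) (hne : ∀ y u, IsDirection y u → u ≠ 0)
    (hforward : ∀ y ∉ G, ∀ u, IsDirection y u → ∀ t : ℝ, 0 < t →
      y + t • u ∉ G ∧ ∀ v, IsDirection (y + t • u) v → v = u)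
    (hback : ∀ y u, IsDirection y u → ∃ t : ℝ, ¬ IsDirection (y + t • u) u) :
    CloseToConvex G := by
  choose! dir hdir using hexists
  refine closeToConvex_of_invariant_direction (dir := dir) (fun y hy => hne y _ (hdir y hy)) ?_ ?_
  · intro y hy t ht
    obtain ⟨hout, hunique⟩ := hforward y hy _ (hdir y hy) t ht
    exact ⟨hout, hunique _ (hdir _ hout)⟩
  · intro y hy
    obtain ⟨t, ht⟩ := hback y _ (hdir y hy)
    refine ⟨t, fun ⟨hout, heq⟩ => ht ?_⟩
    have h := hdir _ hout
    rwa [heq] at h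

end HalfLine

theorem closeToConvex_of_starConvex {E : Type*} [NormedAddCommGroup E] [NormedSpace ℝ E]
    {G : Set E} {x : E} (hG : StarConvex ℝ x G) (hx : x ∈ G) : CloseToConvex G := by
  have hpos : ∀ y ∉ G, 0 < ‖y - x‖ := fun y hy =>
    norm_sub_pos_iff.2 fun h => hy (h ▸ hx)
  have hpoint : ∀ (y : E) (t : ℝ), y + t • NormedSpace.normalize (y - x) =
      x + (1 + t / ‖y - x‖) • (y - x) := by
    intro y t
    rw [NormedSpace.normalize, smul_smul, div_eq_mul_inv]
    module
  refine closeToConvex_of_invariant_direction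
    (dir := fun y => NormedSpace.normalize (y - x)) ?_ ?_ ?_
  · intro y hy
    rw [Ne, NormedSpace.normalize_eq_zero_iff]
    exact norm_pos_iff.1 (hpos y hy)
  · intro y hy t ht
    have hfactor : 0 < t / ‖y - x‖ := div_pos ht (hpos y hy)
    rw [hpoint]
    refine ⟨fun hmem => hy ?_, ?_⟩
    · have h := hG.add_smul_sub_mem hmem (inv_nonneg.2 (by positivity : 0 ≤ 1 + t / ‖y - x‖))
        (inv_le_one_of_one_le₀ (by linarith))
      rwa [add_sub_cancel_left, inv_smul_smul₀ (by positivity), add_sub_cancel] at h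
    · rw [add_sub_cancel_left, NormedSpace.normalize_smul_of_pos (by positivity)]
  · intro y hy
    refine ⟨-‖y - x‖, fun h => h.1 ?_⟩
    rw [hpoint, neg_div, div_self (hpos y hy).ne']
    simpa using hx

/-! ### Transfinite families of half-lines -/

theorem exists_transfinite_choice {X β : Type*} [LT X] [WellFoundedLT X] (default : β)
    (P : (p : X) → ((q : X) → q < p → β) → β → Prop) :
    ∃ f : X → β, ∀ p, P p (fun q _ => f q) (f p) ∨
      f p = default ∧ ∀ b, ¬ P p (fun q _ => f q) b := by
  classical
  let f : X → β := wellFounded_lt.fix fun p prev =>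
    if h : ∃ b, P p prev b then h.choose else default
  refine ⟨f, fun p => ?_⟩
  have hf : f p = if h : ∃ b, P p (fun q _ => f q) b then h.choose else default :=
    wellFounded_lt.fix_eq _ p
  by_cases h : ∃ b, P p (fun q _ => f q) b
  · rw [hf, dif_pos h]
    exact .inl h.choose_spec
  · exact .inr ⟨hf.trans (dif_neg h), not_exists.1 h⟩

theorem exists_pairwise_disjoint_sUnion_eq {α : Type*} {X : Set α} {H : Set (Set α)}
    (hsub : ∀ S ∈ H, S ⊆ X)
    (hext : ∀ p ∈ X, ∀ 𝒟 ⊆ H, #𝒟 < #X → p ∉ ⋃₀ 𝒟 → ∃ S ∈ H, p ∈ S ∧ ∀ T ∈ 𝒟, Disjoint S T) :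
    ∃ 𝒞 ⊆ H, 𝒞.Pairwise Disjoint ∧ ⋃₀ 𝒞 = X := by
  obtain ⟨_, _, hord⟩ := Cardinal.exists_ord_eq_type_lt X
  obtain ⟨f, hf⟩ := exists_transfinite_choice (X := X) ∅ fun p prev S =>
    S ∈ H ∧ p.1 ∈ S ∧ ∀ q hq, Disjoint S (prev q hq)
  have hnext : ∀ p, (f p).Nonempty → f p ∈ H ∧ ∀ q < p, Disjoint (f p) (f q) := fun p hp =>
    (hf p).elim (fun h => ⟨h.1, h.2.2⟩) fun h => absurd h.1 hp.ne_empty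
  have hcover : ∀ p : X, ∃ q, p.1 ∈ f q := by
    intro p
    by_contra! hnot
    let 𝒟 : Set (Set α) := {S | S.Nonempty ∧ S ∈ f '' Iio p}
    have hcard : #𝒟 < #X := calc
      #𝒟 ≤ #(f '' Iio p) := Cardinal.mk_le_mk_of_subset fun _ hS => hS.2
      _ ≤ #(Iio p) := Cardinal.mk_image_le
      _ < #X := Cardinal.mk_Iio_lt p hord
    obtain ⟨S, hS, hpS, hdisj⟩ := hext p p.2 𝒟
      (by rintro _ ⟨hne, q, -, rfl⟩; exact (hnext q hne).1) hcard
      (by rintro ⟨_, ⟨-, q, -, rfl⟩, hq⟩; exact hnot q hq)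
    obtain h | ⟨-, h⟩ := hf p
    · exact hnot p h.2.1
    · refine h S ⟨hS, hpS, fun q hq => ?_⟩
      rcases (f q).eq_empty_or_nonempty with hempty | hne
      · simp [hempty]
      · exact hdisj _ ⟨hne, q, hq, rfl⟩
  refine ⟨{S | S.Nonempty ∧ S ∈ range f}, ?_, ?_, Subset.antisymm (sUnion_subset ?_) ?_⟩
  · rintro _ ⟨hne, p, rfl⟩
    exact (hnext p hne).1
  · rintro _ ⟨hp, p, rfl⟩ _ ⟨hq, q, rfl⟩ hne
    rcases lt_trichotomy p q with h | rfl | h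
    · exact ((hnext q hq).2 p h).symm
    · exact absurd rfl hne
    · exact (hnext p hp).2 q h
  · rintro _ ⟨hne, p, rfl⟩
    exact hsub _ (hnext p hne).1
  · intro p hp
    obtain ⟨q, hq⟩ := hcover ⟨p, hp⟩
    exact ⟨f q, ⟨⟨p, hq⟩, q, rfl⟩, hq⟩

theorem exists_forall_notMem_submodule {V : Type*} [AddCommGroup V] [Module ℝ V]
    [FiniteDimensional ℝ V] {ι : Type*} (hι : #ι < 𝔠) {P : ι → Submodule ℝ V}
    (hP : ∀ i, P i ≠ ⊤) : ∃ v, ∀ i, v ∉ P i := by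
  let b := finBasis ℝ V
  -- A proper subspace meets the moment curve in finitely many points.
  let γ : ℝ → V := fun τ => ∑ k : Fin (finrank ℝ V), τ ^ (k : ℕ) • b k
  by_contra! hcon
  choose f hf using fun τ : ℝ => hcon (γ τ)
  obtain ⟨i, hi⟩ := Cardinal.exists_infinite_fiber (f ∘ ULift.down)
    (by rwa [Cardinal.mk_uLift, Cardinal.mk_real, Cardinal.lift_continuum])
  have hinf : (f ⁻¹' {i}).Infinite := by
    refine ((infinite_coe_iff.1 hi).image ULift.down_injective.injOn).mono ?_
    rintro _ ⟨τ, hτ, rfl⟩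
    exact hτ
  obtain ⟨l, hl, hPl⟩ := Submodule.exists_le_ker_of_lt_top (P i) (lt_top_iff_ne_top.2 (hP i))
  let Q : Polynomial ℝ := ∑ k : Fin (finrank ℝ V), Polynomial.C (l (b k)) * Polynomial.X ^ (k : ℕ)
  have heval : ∀ τ, Q.eval τ = l (γ τ) := fun τ => by
    simp only [Q, γ, map_sum, map_smul, smul_eq_mul, Polynomial.eval_finsetSum,
      Polynomial.eval_C_mul, Polynomial.eval_X_pow, mul_comm (_ ^ _)]
  have hroot : f ⁻¹' {i} ⊆ {τ | Q.IsRoot τ} := by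
    rintro τ rfl
    exact (heval τ).trans (hPl (hf τ))
  have hQ : Q = 0 := Polynomial.eq_zero_of_infinite_isRoot Q (hinf.mono hroot)
  refine hl (b.ext fun k => ?_)
  simpa [Q, Polynomial.coeff_X_pow, Fin.val_inj, eq_comm] using
    congrArg (fun q => Polynomial.coeff q k) hQ

section TransfiniteCriterion

variable {E : Type*} [NormedAddCommGroup E] [NormedSpace ℝ E] [FiniteDimensional ℝ E]

theorem exists_mem_isOpen_forall_notMem_submodule {ι : Type*} (hι : #ι < 𝔠)
    {P : ι → Submodule ℝ E} (hP : ∀ i, P i ≠ ⊤) {W : Set E} (hW : IsOpen W) (hne : W.Nonempty) :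
    ∃ w ∈ W, ∀ i, w ∉ P i := by
  obtain ⟨w₀, hw₀⟩ := hne
  obtain ⟨v, hv⟩ := exists_forall_notMem_submodule hι hP
  let I : Set ℝ := {s | w₀ + s • v ∈ W}
  have hI : #I = 𝔠 := by
    have hmem : I ∈ nhds (0 : ℝ) :=
      (hW.preimage (by fun_prop : Continuous fun s : ℝ => w₀ + s • v)).mem_nhds
        (by simpa using hw₀)
    exact (cardinal_eq_of_mem_nhds ℝ hmem).trans Cardinal.mk_real
  by_contra! hcon
  choose f hf using fun s : I => hcon _ s.2
  -- The line `w₀ + ℝ v` meets each `P i` at most once.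
  have hinj : Function.Injective f := by
    intro s s' hss'
    by_contra hne
    have hdiff : ((s : ℝ) - s') • v ∈ P (f s) := by
      have h := sub_mem (hf s) (hss' ▸ hf s')
      rwa [add_sub_add_left_eq_sub, ← sub_smul] at h
    exact hv _ ((Submodule.smul_mem_iff _ (sub_ne_zero.2 (Subtype.coe_injective.ne hne))).1 hdiff)
  have hle := Cardinal.lift_mk_le_lift_mk_of_injective hinj
  rw [hI, Cardinal.lift_continuum, Cardinal.lift_uzero] at hle
  exact hle.not_gt hι

theorem mk_le_continuum_of_finiteDimensional (V : Type*) [AddCommGroup V] [Module ℝ V]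
    [FiniteDimensional ℝ V] : #V ≤ 𝔠 := by
  rw [← Cardinal.lift_le_continuum, Cardinal.mk_congr_lift (finBasis ℝ V).equivFun.toEquiv]
  simpa [Cardinal.mk_real] using
    Cardinal.power_nat_le (n := finrank ℝ V) Cardinal.aleph0_le_continuum

theorem IsHalfLine.exists_subset_range {V : Type*} [AddCommGroup V] [Module ℝ V] {S : Set V}
    (hS : IsHalfLine S) : ∃ z y : V, S ⊆ range fun t : ℝ => z + t • y := by
  obtain ⟨z, y, -, rfl | rfl⟩ := hS <;>
  exact ⟨z, y, fun _ ⟨t, _, ht⟩ => ⟨t, ht.symm⟩⟩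

theorem closeToConvex_of_forall_exists_isOpen_ray (hE : 3 ≤ finrank ℝ E) {G : Set E}
    (hG : ∀ p ∉ G, ∃ W : Set E, IsOpen W ∧ W.Nonempty ∧ ∀ v ∈ W, ∀ t : ℝ, 0 ≤ t → p + t • v ∉ G) :
    CloseToConvex G := by
  have : Nontrivial E := nontrivial_of_finrank_pos (R := ℝ) (by lia)
  suffices ∃ 𝒞 ⊆ {S | IsHalfLine S ∧ S ⊆ Gᶜ}, 𝒞.Pairwise Disjoint ∧ ⋃₀ 𝒞 = Gᶜ by
    obtain ⟨𝒞, hsub, hdisj, hunion⟩ := this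
    exact ⟨𝒞, fun S hS => (hsub hS).1, hdisj, hunion⟩
  refine exists_pairwise_disjoint_sUnion_eq (fun S hS => hS.2) fun p hp 𝒟 h𝒟 hcard hcov => ?_
  choose z y hzy using fun T : 𝒟 => (h𝒟 T.2).1.exists_subset_range
  let P : 𝒟 → Submodule ℝ E := fun T => Submodule.span ℝ {z T - p, y T}
  have hP : ∀ T, P T ≠ ⊤ := fun T htop => by
    have hrank : finrank ℝ (P T) ≤ 2 := by
      classical exact (finrank_span_le_card _).trans (by simpa using Finset.card_le_two)
    rw [htop, finrank_top] at hrank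
    lia
  obtain ⟨W, hW, hne, hray⟩ := hG p hp
  obtain ⟨v, ⟨hvW, hv0⟩, hv⟩ := exists_mem_isOpen_forall_notMem_submodule
    (hcard.trans_le ((Cardinal.mk_set_le _).trans (mk_le_continuum_of_finiteDimensional E))) hP
    (hW.inter isOpen_compl_singleton) ((dense_compl_singleton (0 : E)).inter_open_nonempty W hW hne)
  refine ⟨{x | ∃ t : ℝ, 0 ≤ t ∧ x = p + t • v}, ⟨⟨p, v, hv0, .inr rfl⟩, ?_⟩,
    ⟨0, le_rfl, by simp⟩, fun T hT => Set.disjoint_left.2 ?_⟩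
  · rintro _ ⟨t, ht, rfl⟩
    exact hray v hvW t ht
  · rintro _ ⟨t, ht, rfl⟩ hmem
    rcases ht.eq_or_lt with rfl | ht
    · exact hcov ⟨T, hT, by simpa using hmem⟩
    obtain ⟨s, hs⟩ := hzy ⟨T, hT⟩ hmem
    refine hv ⟨T, hT⟩ ((Submodule.smul_mem_iff _ ht.ne').1 (Submodule.mem_span_pair.2 ⟨1, s, ?_⟩))
    rw [one_smul, sub_add_eq_add_sub]
    exact sub_eq_of_eq_add' hs

end TransfiniteCriterion

/-! ### Distance ratio balls -/

theorem inter_frontier_nonempty_of_isPreconnected {X : Type*} [TopologicalSpace X] {s G : Set X}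
    (hs : IsPreconnected s) (hmem : (s ∩ G).Nonempty) (hnotMem : (s \ G).Nonempty) :
    (s ∩ frontier G).Nonempty := by
  by_contra hempty
  have hinterior : s ∩ closure G ⊆ interior G := fun z hz =>
    by_contra fun h => hempty ⟨z, hz.1, hz.2, h⟩
  have hsub : s ⊆ interior G := by
    refine hs.subset_left_of_subset_union isOpen_interior isClosed_closure.isOpen_compl
      (disjoint_compl_right.mono_left (interior_subset.trans subset_closure)) ?_ ?_
    · exact fun z hz => (em (z ∈ closure G)).imp (fun h => hinterior ⟨hz, h⟩) id
    · obtain ⟨z, hz⟩ := hmem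
      exact ⟨z, hz.1, hinterior ⟨hz.1, subset_closure hz.2⟩⟩
  obtain ⟨z, hz⟩ := hnotMem
  exact hz.2 (interior_subset (hsub hz.1))

section JRegion

variable {X : Type*} [PseudoMetricSpace X] {Z : Set X} {x : X} {R : ℝ}

/-- The `j`-metric ball of radius `log (1 + R)` about `x` in a domain with boundary `Z`, written
in terms of `Z` alone. -/
def jRegion (Z : Set X) (x : X) (R : ℝ) : Set X :=
  ball x (R * infDist x Z) ∩ {y | dist y x < R * infDist y Z}

theorem isOpen_jRegion : IsOpen (jRegion Z x R) :=
  isOpen_ball.inter (isOpen_lt (by fun_prop) ((continuous_infDist_pt Z).const_mul R))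

theorem self_mem_jRegion (hZ : IsClosed Z) (hne : Z.Nonempty) (hx : x ∉ Z) (hR : 0 < R) :
    x ∈ jRegion Z x R := by
  have h : 0 < R * infDist x Z := mul_pos hR ((hZ.notMem_iff_infDist_pos hne).1 hx)
  exact ⟨mem_ball_self h, by simpa using h⟩

theorem dist_lt_mul_dist_of_mem_jRegion (hR : 0 ≤ R) {y z : X} (hy : y ∈ jRegion Z x R)
    (hz : z ∈ Z) : dist y x < R * dist y z :=
  hy.2.trans_le (mul_le_mul_of_nonneg_left (infDist_le_dist_of_mem hz) hR)

theorem mul_infDist_le_of_notMem_jRegion {y : X} (hball : y ∈ ball x (R * infDist x Z))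
    (hy : y ∉ jRegion Z x R) : R * infDist y Z ≤ dist y x :=
  not_lt.1 fun h => hy ⟨hball, h⟩

end JRegion

section JBall

variable {E : Type*} [NormedAddCommGroup E] {G : Set E} {x : E} {R : ℝ}

theorem jDist_lt_iff {y : E} {r : ℝ} (hr : 0 < r) (hx : 0 < infDist x (frontier G))
    (hy : 0 < infDist y (frontier G)) :
    jDist G x y < r ↔ y ∈ jRegion (frontier G) x (Real.exp r - 1) := by
  have hR : 0 ≤ Real.exp r - 1 := sub_nonneg.2 (Real.one_le_exp hr.le)
  have hmin := lt_min hx hy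
  rw [jDist, Real.log_lt_iff_lt_exp (by positivity), ← lt_sub_iff_add_lt', div_lt_iff₀ hmin,
    mul_min_of_nonneg _ _ hR, lt_min_iff, dist_comm]
  rfl

variable [NormedSpace ℝ E]

theorem jRegion_frontier_subset (hx : x ∈ G) (hR : R ≤ 2) :
    jRegion (frontier G) x R ⊆ G := by
  intro y hy
  by_contra hyG
  obtain ⟨z, hzs, hz⟩ := inter_frontier_nonempty_of_isPreconnected
    (convex_segment x y).isPreconnected ⟨x, left_mem_segment ℝ x y, hx⟩
    ⟨y, right_mem_segment ℝ x y, hyG⟩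
  have hxz := infDist_le_dist_of_mem (x := x) hz
  have hyz := infDist_le_dist_of_mem (x := y) hz
  have hsum := dist_add_dist_of_mem_segment hzs
  rw [dist_comm z y, dist_comm x y] at hsum
  have hball : dist y x < R * infDist x (frontier G) := hy.1
  have hcone : dist y x < R * infDist y (frontier G) := hy.2
  nlinarith [infDist_nonneg (x := x) (s := frontier G), infDist_nonneg (x := y) (s := frontier G)]

theorem jBall_eq_jRegion (hG : IsOpen G) (hne : G ≠ univ) (hx : x ∈ G) {r : ℝ}
    (hr0 : 0 < r) (hr : Real.exp r - 1 ≤ 2) :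
    jBall G x r = jRegion (frontier G) x (Real.exp r - 1) := by
  have hpos : ∀ y ∈ G, 0 < infDist y (frontier G) := fun y hy =>
    (isClosed_frontier.notMem_iff_infDist_pos (nonempty_frontier_iff.2 ⟨⟨x, hx⟩, hne⟩)).1
      fun h => (hG.frontier_eq ▸ h).2 hy
  ext y
  refine ⟨fun hy => (jDist_lt_iff hr0 (hpos x hx) (hpos y hy.1)).1 hy.2, fun hy => ?_⟩
  have hyG := jRegion_frontier_subset hx hr hy
  exact ⟨hyG, (jDist_lt_iff hr0 (hpos x hx) (hpos y hyG)).2 hy⟩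

theorem starConvex_jRegion {Z : Set E} (hR0 : 0 ≤ R) (hR : R ≤ 1) :
    StarConvex ℝ x (jRegion Z x R) := by
  rw [starConvex_iff_segment_subset]
  intro y hy w hw
  have hsum := dist_add_dist_of_mem_segment hw
  rw [dist_comm x w, dist_comm w y, dist_comm x y] at hsum
  have hwx : dist w x ≤ dist y x := by linarith [dist_nonneg (x := y) (y := w)]
  refine ⟨hwx.trans_lt hy.1, ?_⟩
  have hcone : dist y x < R * infDist y Z := hy.2
  have hle : R * dist y w ≤ dist y w := mul_le_of_le_one_left dist_nonneg hR
  calc dist w x = dist y x - dist y w := by linarith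
    _ < R * infDist y Z - R * dist y w := by linarith
    _ = R * (infDist y Z - dist y w) := by ring
    _ ≤ R * infDist w Z :=
      mul_le_mul_of_nonneg_left (sub_le_iff_le_add.2 infDist_le_infDist_add_dist) hR0

end JBall

theorem exists_mul_dist_lt_dist {E : Type*} [NormedAddCommGroup E] [NormedSpace ℝ E] {x z : E}
    (hzx : z ≠ x) {R : ℝ} (hR : 1 < R) (hR2 : R < 2) :
    ∃ w, R * dist w z < dist w x ∧ R * dist z x < dist w x := by
  have hd : 0 < dist z x := dist_pos.2 hzx
  obtain ⟨l, hRl, hl⟩ : ∃ l, R < l ∧ l < R / (R - 1) := by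
    refine exists_between ?_
    rw [lt_div_iff₀ (by linarith)]
    nlinarith
  rw [lt_div_iff₀ (by linarith)] at hl
  have hwx : dist (x + l • (z - x)) x = l * dist z x := by
    rw [dist_eq_norm, add_sub_cancel_left, norm_smul, Real.norm_of_nonneg (by linarith),
      dist_eq_norm]
  have hwz : dist (x + l • (z - x)) z = (l - 1) * dist z x := by
    rw [dist_eq_norm, show x + l • (z - x) - z = (l - 1) • (z - x) by module, norm_smul,
      Real.norm_of_nonneg (by linarith), dist_eq_norm]
  refine ⟨x + l • (z - x), ?_, ?_⟩
  · rw [hwx, hwz]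
    nlinarith
  · rw [hwx]
    exact mul_lt_mul_of_pos_right hRl hd

theorem add_smul_notMem_of_convex {V : Type*} [AddCommGroup V] [Module ℝ V] {s : Set V}
    (hs : Convex ℝ s) {p v : V} (hp : p ∈ s) (hv : p + v ∉ s) {t : ℝ} (ht : 1 ≤ t) :
    p + t • v ∉ s := fun h => hv <| by
  have hmem := hs.add_smul_sub_mem hp h ⟨by positivity, inv_le_one_of_one_le₀ ht⟩
  rwa [add_sub_cancel_left, inv_smul_smul₀ (by positivity)] at hmem

section Apollonius

variable {E : Type*} [NormedAddCommGroup E] [InnerProductSpace ℝ E] {x : E} {R : ℝ}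

/-- The sphere of Apollonius `{y | dist y x = R * dist y z}`, for `1 < R`. -/
noncomputable def apolloniusSphere (x : E) (R : ℝ) (z : E) : Sphere E where
  center := x + (R ^ 2 / (R ^ 2 - 1)) • (z - x)
  radius := R / (R ^ 2 - 1) * dist z x

theorem mul_power_apolloniusSphere (hR : 1 < R) (y z : E) :
    (R ^ 2 - 1) * (apolloniusSphere x R z).power y = (R * dist y z) ^ 2 - dist y x ^ 2 := by
  have hR2 : R ^ 2 - 1 ≠ 0 := by nlinarith
  have hcenter : y - (apolloniusSphere x R z).center =
    (y - x) - (R ^ 2 / (R ^ 2 - 1)) • (z - x) := by simp only [apolloniusSphere]; abel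
  have hsub : y - z = (y - x) - (z - x) := by abel
  rw [Sphere.power, dist_eq_norm, hcenter, dist_eq_norm y z, hsub, dist_eq_norm y x, mul_pow]
  simp only [apolloniusSphere, dist_eq_norm, mul_pow]
  rw [norm_sub_sq_real (y - x), norm_sub_sq_real (y - x), norm_smul, inner_smul_right,
    mul_pow, Real.norm_eq_abs, sq_abs]
  field_simp
  ring

theorem power_apolloniusSphere_nonpos_iff (hR : 1 < R) (y z : E) :
    (apolloniusSphere x R z).power y ≤ 0 ↔ R * dist y z ≤ dist y x := by
  have hR2 : 0 < R ^ 2 - 1 := by nlinarith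
  rw [← sq_le_sq₀ (by positivity) dist_nonneg, ← sub_nonpos (a := _ ^ 2),
    ← mul_power_apolloniusSphere hR]
  exact (smul_nonpos_iff_nonpos_of_pos_left hR2).symm

theorem convex_setOf_mul_dist_le_dist (hR : 1 < R) (x z : E) :
    Convex ℝ {y | R * dist y z ≤ dist y x} := by
  have hR2 : 0 < R ^ 2 - 1 := by nlinarith
  convert convex_closedBall (apolloniusSphere x R z).center (apolloniusSphere x R z).radius
  ext y
  rw [mem_closedBall, ← Sphere.power_nonpos_iff_dist_center_le_radius,
    power_apolloniusSphere_nonpos_iff hR, mem_ofPred_eq]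
  simp only [apolloniusSphere]
  positivity

theorem add_smul_notMem_ball_of_inner_nonneg {ρ : ℝ} {p v : E} (hp : ρ ≤ dist p x)
    (hv : 0 ≤ ⟪p - x, v⟫) {t : ℝ} (ht : 0 ≤ t) : p + t • v ∉ ball x ρ := by
  rw [mem_ball, not_lt]
  refine hp.trans ?_
  rw [dist_eq_norm, dist_eq_norm, add_sub_right_comm,
    ← sq_le_sq₀ (norm_nonneg _) (norm_nonneg _), norm_add_sq_real, inner_smul_right]
  nlinarith [mul_nonneg ht hv, sq_nonneg ‖t • v‖]

theorem add_smul_notMem_jRegion {Z : Set E} {z p v : E} (hR : 1 < R) (hz : z ∈ Z)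
    (hp : p ∈ ball x (R * infDist x Z)) (hpz : R * dist p z ≤ dist p x)
    (hvz : R * dist (p + v) z ≤ dist (p + v) x) (hv : R * infDist x Z ≤ dist (p + v) x)
    {t : ℝ} (ht : 0 ≤ t) : p + t • v ∉ jRegion Z x R := by
  intro hmem
  rcases le_total t 1 with ht1 | ht1
  · have hconv := (convex_setOf_mul_dist_le_dist hR x z).add_smul_mem hpz hvz ⟨ht, ht1⟩
    exact (dist_lt_mul_dist_of_mem_jRegion (by positivity) hmem hz).not_ge hconv
  · exact add_smul_notMem_of_convex (convex_ball _ _) hp (not_lt.2 hv) ht1 hmem.1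

theorem closeToConvex_jRegion_of_three_le_finrank (hE : 3 ≤ finrank ℝ E) {Z : Set E}
    (hZ : IsClosed Z) (hne : Z.Nonempty) (hx : x ∉ Z) (hR : 1 < R) (hR2 : R < 2) :
    CloseToConvex (jRegion Z x R) := by
  have := FiniteDimensional.of_finrank_pos (K := ℝ) (V := E) (by lia)
  have hd : 0 < infDist x Z := (hZ.notMem_iff_infDist_pos hne).1 hx
  refine closeToConvex_of_forall_exists_isOpen_ray hE fun p hp => ?_
  rcases le_or_gt (R * infDist x Z) (dist p x) with hfar | hnear
  · have hpx : p - x ≠ 0 := sub_ne_zero.2 <| dist_pos.1 <| hfar.trans_lt' (by positivity)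
    refine ⟨{v | 0 < ⟪p - x, v⟫}, isOpen_lt (by fun_prop) (by fun_prop),
      ⟨p - x, real_inner_self_pos.2 hpx⟩, fun v hv t ht hmem => ?_⟩
    exact add_smul_notMem_ball_of_inner_nonneg hfar (le_of_lt hv) ht hmem.1
  · obtain ⟨z, hz, hzp⟩ := hZ.exists_infDist_eq_dist hne p
    have hpz : R * dist p z ≤ dist p x := hzp ▸ mul_infDist_le_of_notMem_jRegion hnear hp
    have hzx : infDist x Z ≤ dist z x := dist_comm z x ▸ infDist_le_dist_of_mem hz
    obtain ⟨w, hwz, hwx⟩ := exists_mul_dist_lt_dist (dist_pos.1 (hd.trans_le hzx)) hR hR2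
    refine ⟨{v | R * dist (p + v) z < dist (p + v) x} ∩ {v | R * infDist x Z < dist (p + v) x},
      (isOpen_lt (by fun_prop) (by fun_prop)).inter (isOpen_lt (by fun_prop) (by fun_prop)),
      ⟨w - p, ?_, ?_⟩, fun v hv t ht => ?_⟩
    · rwa [mem_ofPred_eq, add_sub_cancel]
    · rw [mem_ofPred_eq, add_sub_cancel]
      exact hwx.trans_le' (by gcongr)
    · exact add_smul_notMem_jRegion hR hz hnear hpz hv.1.le hv.2.le ht

end Apollonius

/-! ### Outer normals -/

theorem isCompact_convexHull {E : Type*} [NormedAddCommGroup E] [NormedSpace ℝ E]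
    [FiniteDimensional ℝ E] {K : Set E} (hK : IsCompact K) : IsCompact (convexHull ℝ K) := by
  let combo (n : ℕ) (q : (Fin n → ℝ) × (Fin n → E)) : E := ∑ i, q.1 i • q.2 i
  let S (n : ℕ) : Set ((Fin n → ℝ) × (Fin n → E)) := stdSimplex ℝ (Fin n) ×ˢ univ.pi fun _ => K
  suffices h : convexHull ℝ K = ⋃ n ∈ Iic (finrank ℝ E + 1), combo n '' S n by
    rw [h]
    exact (finite_Iic _).isCompact_biUnion fun n _ =>
      ((isCompact_stdSimplex ℝ (Fin n)).prod (isCompact_univ_pi fun _ => hK)).image (by fun_prop)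
  refine Subset.antisymm (fun y hy => ?_) (iUnion₂_subset fun n _ => ?_)
  · obtain ⟨ι, _, z, w, hz, hindep, hw, hsum, rfl⟩ := eq_pos_convex_span_of_mem_convexHull hy
    let f := Fintype.equivFin ι
    refine mem_biUnion (x := Fintype.card ι) ?_ ⟨(w ∘ f.symm, z ∘ f.symm), ⟨⟨?_, ?_⟩, ?_⟩, ?_⟩
    · exact hindep.card_le_finrank_succ.trans (by gcongr; exact Submodule.finrank_le _)
    · exact fun i => (hw _).le
    · exact (f.symm.sum_comp w).trans hsum
    · exact fun i _ => hz (mem_range_self _)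
    · exact f.symm.sum_comp fun i => w i • z i
  · rintro _ ⟨q, ⟨⟨hw, hsum⟩, hz⟩, rfl⟩
    exact (convex_convexHull ℝ K).sum_mem (fun i _ => hw i) hsum
      fun i _ => subset_convexHull ℝ K (hz i (mem_univ i))

theorem add_smul_mem_interior {V : Type*} [AddCommGroup V] [Module ℝ V] [TopologicalSpace V]
    [IsTopologicalAddGroup V] [ContinuousConstSMul ℝ V] {M : Set V} (hM : Convex ℝ M) {y v : V}
    {t τ : ℝ} (hy : y ∈ interior M) (hτ : y + τ • v ∈ M) (ht : 0 < t) (htτ : t < τ) :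
    y + t • v ∈ interior M := by
  refine hM.openSegment_interior_self_subset_interior hy hτ ?_
  rw [openSegment_eq_image']
  have hτ0 : τ ≠ 0 := (ht.trans htτ).ne'
  refine ⟨t / τ, ⟨div_pos ht (ht.trans htτ), (div_lt_one (ht.trans htτ)).2 htτ⟩, ?_⟩
  simp only [add_sub_cancel_left, smul_smul, div_mul_cancel₀ _ hτ0]

section OuterNormal

variable {E : Type*} [NormedAddCommGroup E] [InnerProductSpace ℝ E] {M : Set E} {p u : E}

/-- `u` is a unit outer normal of the set `M` at its point `p`. -/
structure IsOuterNormal (M : Set E) (p u : E) : Prop where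
  norm_eq : ‖u‖ = 1
  mem : p ∈ M
  inner_le : ∀ w ∈ M, ⟪u, w⟫ ≤ ⟪u, p⟫

theorem real_inner_self_of_norm_eq_one (hu : ‖u‖ = 1) : ⟪u, u⟫ = 1 := by
  rw [real_inner_self_eq_norm_sq, hu, one_pow]

theorem inner_add_smul_of_norm_eq_one (hu : ‖u‖ = 1) (y : E) (t : ℝ) :
    ⟪u, y + t • u⟫ = ⟪u, y⟫ + t := by
  rw [inner_add_right, inner_smul_right, real_inner_self_of_norm_eq_one hu, mul_one]

theorem inner_lt_of_mem_interior (hu : u ≠ 0) {a : ℝ} (hM : ∀ w ∈ M, ⟪u, w⟫ ≤ a) {y : E}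
    (hy : y ∈ interior M) : ⟪u, y⟫ < a := by
  have hf : innerSL ℝ u ≠ 0 := fun h => hu (inner_self_eq_zero.1 (DFunLike.congr_fun h u))
  have hsub : M ⊆ innerSL ℝ u ⁻¹' Iic a := hM
  have hy' := interior_mono hsub hy
  rwa [← ((innerSL ℝ u).isOpenMap_of_ne_zero hf).preimage_interior_eq_interior_preimage
    (innerSL ℝ u).continuous, interior_Iic] at hy'

theorem exists_norm_eq_one_forall_inner_le [CompleteSpace E] (hM : Convex ℝ M)
    (hne : (interior M).Nonempty) {y : E} (hy : y ∉ interior M) :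
    ∃ u : E, ‖u‖ = 1 ∧ ∀ w ∈ M, ⟪u, w⟫ ≤ ⟪u, y⟫ := by
  obtain ⟨f, hf, hfM⟩ := geometric_hahn_banach_of_nonempty_interior_point hM hy hne
  obtain ⟨v, rfl⟩ := (InnerProductSpace.toDual ℝ E).surjective f
  have hv : v ≠ 0 := fun h => hf (by rw [h, map_zero])
  refine ⟨‖v‖⁻¹ • v, norm_smul_inv_norm hv, fun w hw => ?_⟩
  rw [real_inner_smul_left, real_inner_smul_left]
  exact mul_le_mul_of_nonneg_left (hfM w hw) (by positivity)

theorem exists_isOuterNormal_add_smul [CompleteSpace E] (hM : Convex ℝ M) (hcl : IsClosed M)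
    (hne : (interior M).Nonempty) {y : E} (hy : y ∉ interior M) :
    ∃ p u, ∃ t : ℝ, 0 ≤ t ∧ y = p + t • u ∧ IsOuterNormal M p u := by
  by_cases hyM : y ∈ M
  · obtain ⟨u, hu, hle⟩ := exists_norm_eq_one_forall_inner_le hM hne hy
    exact ⟨y, u, 0, le_rfl, by simp, hu, hyM, hle⟩
  · obtain ⟨p, hp, hproj⟩ := exists_norm_eq_iInf_of_complete_convex (hne.mono interior_subset)
      hcl.isComplete hM y
    rw [norm_eq_iInf_iff_real_inner_le_zero hM hp] at hproj
    have hyp : y - p ≠ 0 := sub_ne_zero.2 fun h => hyM (h ▸ hp)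
    refine ⟨p, ‖y - p‖⁻¹ • (y - p), ‖y - p‖, norm_nonneg _, ?_, norm_smul_inv_norm hyp, hp,
      fun w hw => ?_⟩
    · rw [smul_inv_smul₀ (norm_ne_zero_iff.2 hyp), add_sub_cancel]
    · rw [← sub_nonpos, ← inner_sub_right, real_inner_smul_left]
      exact mul_nonpos_of_nonneg_of_nonpos (by positivity) (hproj w hw)

namespace IsOuterNormal

variable {p' u' : E}

theorem ne_zero (h : IsOuterNormal M p u) : u ≠ 0 :=
  norm_ne_zero_iff.1 (h.norm_eq ▸ one_ne_zero)

theorem congr_point (h : IsOuterNormal M p u) (hp' : p' ∈ M) (heq : ⟪u, p'⟫ = ⟪u, p⟫) :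
    IsOuterNormal M p' u :=
  ⟨h.norm_eq, hp', fun w hw => heq ▸ h.inner_le w hw⟩

theorem inner_lt (h : IsOuterNormal M p u) {y : E} (hy : y ∈ interior M) : ⟪u, y⟫ < ⟪u, p⟫ :=
  inner_lt_of_mem_interior h.ne_zero h.inner_le hy

theorem add_smul_notMem_interior (h : IsOuterNormal M p u) {t : ℝ} (ht : 0 ≤ t) :
    p + t • u ∉ interior M := fun hy => by
  have hlt := h.inner_lt hy
  rw [inner_add_smul_of_norm_eq_one h.norm_eq] at hlt
  linarith

theorem point_eq_of_add_smul_eq (h : IsOuterNormal M p u) (h' : IsOuterNormal M p' u') {t t' : ℝ}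
    (ht : 0 ≤ t) (ht' : 0 ≤ t') (heq : p + t • u = p' + t' • u') : p = p' := by
  have hsub : p - p' = t' • u' - t • u := by
    rw [sub_eq_sub_iff_add_eq_add, heq, add_comm]
  have hle := h.inner_le p' h'.mem
  have hle' := h'.inner_le p h.mem
  have hsq : ⟪p - p', p - p'⟫ = t' * (⟪u', p⟫ - ⟪u', p'⟫) - t * (⟪u, p⟫ - ⟪u, p'⟫) := by
    nth_rewrite 1 [hsub]
    rw [inner_sub_left, real_inner_smul_left, real_inner_smul_left, inner_sub_right,
      inner_sub_right]
  exact sub_eq_zero.1 (real_inner_self_nonpos.1 (by nlinarith))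

theorem normal_eq_of_add_smul_eq (h : IsOuterNormal M p u) (h' : IsOuterNormal M p' u') {t t' : ℝ}
    (ht : 0 < t) (ht' : 0 ≤ t') (heq : p + t • u = p' + t' • u') : u' = u := by
  obtain rfl := h.point_eq_of_add_smul_eq h' ht.le ht' heq
  have hsmul : t • u = t' • u' := add_left_cancel heq
  obtain rfl : t = t' := by
    simpa [norm_smul, h.norm_eq, h'.norm_eq, abs_of_pos ht, abs_of_nonneg ht'] using
      congrArg norm hsmul
  exact (smul_right_injective E ht.ne' hsmul).symm

/-- Otherwise the points lexicographically below `e` for `(⟪u, ·⟫, ⟪v, ·⟫)` form a convex set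
containing `K` but not `e`. -/
theorem exists_mem_inner_eq {K : Set E} {e : E} (he : IsOuterNormal (convexHull ℝ K) e u)
    (v : E) : ∃ b ∈ K, ⟪u, b⟫ = ⟪u, e⟫ ∧ ⟪v, e⟫ ≤ ⟪v, b⟫ := by
  by_contra! hK
  have hsub : K ⊆ {w | ⟪u, w⟫ < ⟪u, e⟫ ∨ ⟪u, w⟫ = ⟪u, e⟫ ∧ ⟪v, w⟫ < ⟪v, e⟫} := fun b hb =>
    (he.inner_le b (subset_convexHull ℝ K hb)).lt_or_eq.imp_right fun h => ⟨h, hK b hb h⟩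
  have hconvex : Convex ℝ {w | ⟪u, w⟫ < ⟪u, e⟫ ∨ ⟪u, w⟫ = ⟪u, e⟫ ∧ ⟪v, w⟫ < ⟪v, e⟫} := by
    rw [convex_iff_forall_pos]
    intro w hw w' hw' a b ha hb hab
    obtain rfl : a = 1 - b := by linarith
    simp only [mem_ofPred_eq, inner_add_right, inner_smul_right] at hw hw' ⊢
    rcases hw with hw | ⟨hw, hvw⟩ <;> rcases hw' with hw' | ⟨hw', hvw'⟩
    · left; nlinarith
    · left; nlinarith
    · left; nlinarith
    · right; constructor <;> nlinarith
  simpa using convexHull_min hsub hconvex he.mem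

end IsOuterNormal

end OuterNormal

section Power

variable {E : Type*} [NormedAddCommGroup E]

theorem continuous_power (s : Sphere E) : Continuous s.power := by
  unfold Sphere.power
  fun_prop

variable [InnerProductSpace ℝ E]

theorem power_add_smul_of_norm_eq_one (s : Sphere E) {u : E} (hu : ‖u‖ = 1)
    (y : E) (t : ℝ) :
    s.power (y + t • u) = s.power y + 2 * t * (⟪u, y⟫ - ⟪u, s.center⟫) + t ^ 2 := by
  rw [Sphere.power, Sphere.power, dist_eq_norm, dist_eq_norm, add_sub_right_comm,
    norm_add_sq_real, inner_smul_right, real_inner_comm, inner_sub_right, norm_smul, hu, mul_one,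
    Real.norm_eq_abs, sq_abs]
  ring

theorem power_add_smul_sub (s : Sphere E) (p q : E) (t : ℝ) :
    s.power (p + t • (q - p)) =
      (1 - t) * s.power p + t * s.power q - t * (1 - t) * ‖q - p‖ ^ 2 := by
  have hp : p + t • (q - p) - s.center = (p - s.center) + t • (q - p) := by abel
  have hq : q - s.center = (p - s.center) + (q - p) := by abel
  rw [Sphere.power, Sphere.power, Sphere.power, dist_eq_norm, dist_eq_norm, dist_eq_norm, hp, hq,
    norm_add_sq_real, norm_add_sq_real, inner_smul_right, norm_smul, Real.norm_eq_abs, mul_pow,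
    sq_abs]
  ring

end Power

/-! ### Open sets in the plane whose complement is covered by discs -/

section Exit

variable {E : Type*} [NormedAddCommGroup E] [InnerProductSpace ℝ E] {M : Set E} {s s' : Sphere E}
  {u y : E}

/-- `u` is an outer normal of `M` at a point of the open disc bounded by `s`, and the centre of
`s` is on the outer side of the corresponding supporting hyperplane. Points of `M` in this disc are
moved out of `M` in the direction `u`. -/
def IsExitNormal (M : Set E) (s : Sphere E) (u : E) : Prop :=
  ∃ e, IsOuterNormal M e u ∧ s.power e < 0 ∧ ⟪u, e⟫ ≤ ⟪u, s.center⟫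

theorem exists_isExitNormal [CompleteSpace E] (hM : Convex ℝ M) (hcl : IsClosed M)
    (hy : y ∈ interior M) (hpower : s.power y ≤ 0) (hcenter : s.center ∉ interior M) :
    ∃ u, IsExitNormal M s u := by
  obtain ⟨e, hes, he⟩ := inter_frontier_nonempty_of_isPreconnected
    (convex_segment y s.center).isPreconnected ⟨y, left_mem_segment ℝ y s.center, hy⟩
    ⟨s.center, right_mem_segment ℝ y s.center, hcenter⟩
  rw [isOpen_interior.frontier_eq] at he
  obtain ⟨u, hu, hle⟩ := exists_norm_eq_one_forall_inner_le hM ⟨y, hy⟩ he.2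
  have heM : IsOuterNormal M e u := ⟨hu, closure_minimal interior_subset hcl he.1, hle⟩
  refine ⟨u, e, heM, ?_, ?_⟩
  · have hye : 0 < dist y e := dist_pos.2 fun h => he.2 (h ▸ hy)
    have hsum := dist_add_dist_of_mem_segment hes
    have hlt : dist e s.center ^ 2 < dist y s.center ^ 2 := by gcongr; linarith
    exact (sub_lt_sub_right hlt _).trans_le hpower
  · obtain ⟨t, ⟨ht0, ht1⟩, rfl⟩ := segment_eq_image' ℝ y s.center ▸ hes
    have hlt := heM.inner_lt hy
    simp only [inner_add_right, inner_smul_right, inner_sub_right] at hlt ⊢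
    have hpos : 0 < ⟪u, s.center⟫ - ⟪u, y⟫ := pos_of_mul_pos_right (by linarith) ht0
    nlinarith

theorem power_add_smul_neg (hu : ‖u‖ = 1) (hpower : s.power y ≤ 0) {t : ℝ} (ht : 0 < t)
    (hcenter : ⟪u, y + t • u⟫ ≤ ⟪u, s.center⟫) : s.power (y + t • u) < 0 := by
  rw [inner_add_smul_of_norm_eq_one hu] at hcenter
  rw [power_add_smul_of_norm_eq_one s hu]
  nlinarith

theorem inner_center_le_inner_center (hu : ‖u‖ = 1) {t : ℝ} (ht : 0 < t)
    (h : s.power y ≤ s'.power y) (h' : s'.power (y + t • u) ≤ s.power (y + t • u)) :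
    ⟪u, s.center⟫ ≤ ⟪u, s'.center⟫ := by
  rw [power_add_smul_of_norm_eq_one s hu, power_add_smul_of_norm_eq_one s' hu] at h'
  exact le_of_mul_le_mul_left (by linarith) ht

theorem IsOuterNormal.isExitNormal_of_power_le {t τ : ℝ} (hτ : IsOuterNormal M (y + τ • u) u)
    (ht : 0 < t) (htτ : t < τ) (hpower : s.power y ≤ 0)
    (hcenter : ⟪u, y + τ • u⟫ ≤ ⟪u, s.center⟫) (h : s.power y ≤ s'.power y)
    (h' : s'.power (y + t • u) ≤ s.power (y + t • u)) : IsExitNormal M s' u := by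
  have hcenter' : ⟪u, y + τ • u⟫ ≤ ⟪u, s'.center⟫ :=
    hcenter.trans (inner_center_le_inner_center hτ.norm_eq ht h h')
  have hneg : s.power (y + t • u) < 0 := by
    refine power_add_smul_neg hτ.norm_eq hpower ht (hcenter.trans' ?_)
    simp only [inner_add_smul_of_norm_eq_one hτ.norm_eq]
    gcongr
  refine ⟨y + τ • u, hτ, ?_, hcenter'⟩
  rw [show y + τ • u = (y + t • u) + (τ - t) • u by module] at hcenter' ⊢
  exact power_add_smul_neg hτ.norm_eq (h'.trans hneg.le) (sub_pos.2 htτ) hcenter'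

variable {𝒮 : Set (Sphere E)}

/-- The directions in which the point `y` outside a set `B` is moved away from `B`, where `M` is
the closed convex hull of `B` and the discs bounded by the spheres in `𝒮` cover `M \ B`: outside
`M` away from the nearest point of `M`, inside `M` along the exit normal of a disc of minimal
power. -/
def IsEscapeDirection (M : Set E) (𝒮 : Set (Sphere E)) (y u : E) : Prop :=
  (∃ p, ∃ t : ℝ, 0 ≤ t ∧ y = p + t • u ∧ IsOuterNormal M p u) ∨
    y ∈ interior M ∧ ∃ s ∈ 𝒮, IsMinOn (fun s => s.power y) 𝒮 s ∧ IsExitNormal M s u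

namespace IsEscapeDirection

theorem norm_eq (h : IsEscapeDirection M 𝒮 y u) : ‖u‖ = 1 := by
  rcases h with ⟨p, t, -, -, hp⟩ | ⟨-, s, -, -, e, he, -⟩
  exacts [hp.norm_eq, he.norm_eq]

theorem exists_mem_inner_le (h : IsEscapeDirection M 𝒮 y u) : ∃ p ∈ M, ⟪u, p⟫ ≤ ⟪u, y⟫ := by
  rcases h with ⟨p, t, ht, rfl, hp⟩ | ⟨hy, -⟩
  · exact ⟨p, hp.mem, by rw [inner_add_smul_of_norm_eq_one hp.norm_eq]; linarith⟩
  · exact ⟨y, interior_subset hy, le_rfl⟩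

theorem exists_add_smul_not (hM : Bornology.IsBounded M) (y u : E) :
    ∃ t : ℝ, ¬ IsEscapeDirection M 𝒮 (y + t • u) u := by
  obtain ⟨C, hC⟩ := hM.exists_norm_le
  refine ⟨-⟪u, y⟫ - C - 1, fun h => ?_⟩
  obtain ⟨p, hp, hle⟩ := h.exists_mem_inner_le
  rw [inner_add_smul_of_norm_eq_one h.norm_eq] at hle
  have hup : |⟪u, p⟫| ≤ C := by
    simpa [h.norm_eq] using (abs_real_inner_le_norm u p).trans (by simpa [h.norm_eq] using hC p hp)
  linarith [neg_le_of_abs_le hup]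

theorem eq_of_isOuterNormal_add_smul {p v : E} {t : ℝ}
    (h : IsEscapeDirection M 𝒮 (p + t • u) v) (hp : IsOuterNormal M p u) (ht : 0 ≤ t) :
    IsOuterNormal M p v ∧ (0 < t → v = u) := by
  rcases h with ⟨p', t', ht', heq, hp'⟩ | ⟨hint, -⟩
  · exact ⟨hp.point_eq_of_add_smul_eq hp' ht ht' heq ▸ hp',
      fun ht => hp.normal_eq_of_add_smul_eq hp' ht ht' heq⟩
  · exact absurd hint (hp.add_smul_notMem_interior ht)

end IsEscapeDirection

theorem exists_isEscapeDirection [CompleteSpace E] (hM : Convex ℝ M) (hcl : IsClosed M)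
    (hne : (interior M).Nonempty) (hcenter : ∀ s ∈ 𝒮, s.center ∉ interior M)
    (hmin : y ∈ interior M → ∃ s ∈ 𝒮, IsMinOn (fun s => s.power y) 𝒮 s ∧ s.power y ≤ 0) :
    ∃ u, IsEscapeDirection M 𝒮 y u := by
  by_cases hy : y ∈ interior M
  · obtain ⟨s, hs, hsmin, hpower⟩ := hmin hy
    obtain ⟨u, hu⟩ := exists_isExitNormal hM hcl hy hpower (hcenter s hs)
    exact ⟨u, .inr ⟨hy, s, hs, hsmin, hu⟩⟩
  · obtain ⟨p, u, t, ht, hyp, hp⟩ := exists_isOuterNormal_add_smul hM hcl hne hy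
    exact ⟨u, .inl ⟨p, t, ht, hyp, hp⟩⟩

end Exit

section Plane

variable {E : Type*} [NormedAddCommGroup E] [InnerProductSpace ℝ E] [Fact (finrank ℝ E = 2)]
  {K : Set E} {s : Sphere E} {e u u' y : E}

theorem finrank_orthogonal_span_singleton_eq_one (hu : u ≠ 0) : finrank ℝ (ℝ ∙ u)ᗮ = 1 :=
  have : Fact (finrank ℝ E = 1 + 1) := ‹_›
  Submodule.finrank_orthogonal_span_singleton hu

theorem exists_smul_eq_of_inner_eq_zero {v w : E} (hu : u ≠ 0) (hv : v ≠ 0) (huv : ⟪u, v⟫ = 0)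
    (huw : ⟪u, w⟫ = 0) : ∃ a : ℝ, a • v = w := by
  rw [← Submodule.mem_orthogonal_singleton_iff_inner_right] at huv huw
  obtain ⟨a, ha⟩ := (finrank_eq_one_iff_of_nonzero' (⟨v, huv⟩ : (ℝ ∙ u)ᗮ)
    (Subtype.coe_ne_coe.1 hv)).1 (finrank_orthogonal_span_singleton_eq_one hu) ⟨w, huw⟩
  exact ⟨a, congrArg Subtype.val ha⟩

theorem exists_ne_zero_inner_eq_zero (hu : u ≠ 0) : ∃ v : E, v ≠ 0 ∧ ⟪u, v⟫ = 0 := by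
  have := nontrivial_of_finrank_eq_succ (finrank_orthogonal_span_singleton_eq_one hu)
  obtain ⟨⟨v, hv⟩, hv0⟩ := exists_ne (0 : (ℝ ∙ u)ᗮ)
  exact ⟨v, fun h => hv0 (Subtype.ext h),
    Submodule.mem_orthogonal_singleton_iff_inner_right.1 hv⟩

namespace IsOuterNormal

theorem mem_of_power_nonpos (he : IsOuterNormal (convexHull ℝ K) e u)
    (hs : ∀ b ∈ K, 0 ≤ s.power b) (hpe : s.power e < 0) {h : E} (huh : ⟪u, h⟫ = ⟪u, e⟫)
    (hph : s.power h ≤ 0) : h ∈ convexHull ℝ K := by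
  rcases eq_or_ne h e with rfl | hne
  · exact he.mem
  obtain ⟨b, hb, hub, hvb⟩ := he.exists_mem_inner_eq (h - e)
  obtain ⟨a, ha⟩ := exists_smul_eq_of_inner_eq_zero (w := b - e) he.ne_zero (sub_ne_zero.2 hne)
    (by rw [inner_sub_right, huh, sub_self]) (by rw [inner_sub_right, hub, sub_self])
  have hb_eq : e + a • (h - e) = b := by rw [ha, add_sub_cancel]
  have ha0 : 0 ≤ a := by
    rw [← sub_nonneg, ← inner_sub_right, ← ha, inner_smul_right] at hvb
    exact nonneg_of_mul_nonneg_left hvb (real_inner_self_pos.2 (sub_ne_zero.2 hne))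
  rcases lt_or_ge a 1 with ha1 | ha1
  · have hpb := hs b hb
    rw [← hb_eq, power_add_smul_sub] at hpb
    have hchord : 0 ≤ a * (1 - a) * ‖h - e‖ ^ 2 :=
      mul_nonneg (mul_nonneg ha0 (by linarith)) (sq_nonneg _)
    nlinarith
  · have hmem := (convex_convexHull ℝ K).add_smul_sub_mem he.mem (subset_convexHull ℝ K hb)
      ⟨inv_nonneg.2 ha0, inv_le_one_of_one_le₀ ha1⟩
    rwa [← ha, inv_smul_smul₀ (by positivity), add_sub_cancel] at hmem

theorem normal_eq_of_power_neg (he : IsOuterNormal (convexHull ℝ K) e u)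
    (he' : IsOuterNormal (convexHull ℝ K) e u') (hint : (interior (convexHull ℝ K)).Nonempty)
    (hs : ∀ b ∈ K, 0 ≤ s.power b) (hpe : s.power e < 0) : u' = u := by
  obtain ⟨v, hv0, huv⟩ := exists_ne_zero_inner_eq_zero he.ne_zero
  have hcont : Continuous fun t : ℝ => s.power (e + t • v) :=
    (continuous_power s).comp (by fun_prop)
  obtain ⟨ε, hε, hball⟩ := Metric.mem_nhds_iff.1 <|
    hcont.continuousAt.preimage_mem_nhds (x := 0) (Iio_mem_nhds (by simpa using hpe))
  have hle : ∀ t ∈ ball (0 : ℝ) ε, t * ⟪u', v⟫ ≤ 0 := fun t ht => by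
    have hmem := he'.inner_le (e + t • v) <| he.mem_of_power_nonpos hs hpe
      (by rw [inner_add_right, inner_smul_right, huv, mul_zero, add_zero]) (le_of_lt (hball ht))
    rwa [inner_add_right, inner_smul_right, add_le_iff_nonpos_right] at hmem
  have hu'v : ⟪u', v⟫ = 0 := by
    have hpos := hle (ε / 2) (by simp [abs_of_pos hε]; linarith)
    have hneg := hle (-(ε / 2)) (by simp [abs_of_pos hε]; linarith)
    nlinarith
  obtain ⟨a, rfl⟩ := exists_smul_eq_of_inner_eq_zero hv0 he.ne_zero
    (by rwa [real_inner_comm]) (by rwa [real_inner_comm] : ⟪v, u'⟫ = 0)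
  obtain ⟨w, hw⟩ := hint
  have hlt := he.inner_lt hw
  have hlt' := he'.inner_lt hw
  rw [real_inner_smul_left, real_inner_smul_left] at hlt'
  have ha : 0 < a := by nlinarith
  have hnorm := he'.norm_eq
  rw [norm_smul, he.norm_eq, mul_one, Real.norm_of_nonneg ha.le] at hnorm
  rw [hnorm, one_smul]

end IsOuterNormal

namespace IsExitNormal

theorem exists_isOuterNormal_center_sub_smul (h : IsExitNormal (convexHull ℝ K) s u)
    (hs : ∀ b ∈ K, 0 ≤ s.power b) :
    ∃ t : ℝ, 0 ≤ t ∧ IsOuterNormal (convexHull ℝ K) (s.center - t • u) u ∧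
      s.power (s.center - t • u) < 0 := by
  obtain ⟨e, he, hpe, hcenter⟩ := h
  set t := ⟪u, s.center⟫ - ⟪u, e⟫ with ht
  have hinner : ⟪u, s.center - t • u⟫ = ⟪u, e⟫ := by
    rw [sub_eq_add_neg, ← neg_smul, inner_add_smul_of_norm_eq_one he.norm_eq, ht]
    ring
  have hdist : dist (s.center - t • u) s.center ≤ dist e s.center := by
    rw [dist_eq_norm, sub_sub_cancel_left, norm_neg, norm_smul, he.norm_eq, mul_one, ht,
      ← inner_sub_right, dist_comm, dist_eq_norm, ← one_mul ‖s.center - e‖, ← he.norm_eq]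
    exact norm_inner_le_norm u _
  have hpower : s.power (s.center - t • u) < 0 :=
    (sub_le_sub_right (pow_le_pow_left₀ dist_nonneg hdist 2) _).trans_lt hpe
  exact ⟨t, sub_nonneg.2 hcenter,
    he.congr_point (he.mem_of_power_nonpos hs hpe hinner hpower.le) hinner, hpower⟩

theorem eq (h : IsExitNormal (convexHull ℝ K) s u) (h' : IsExitNormal (convexHull ℝ K) s u')
    (hint : (interior (convexHull ℝ K)).Nonempty) (hs : ∀ b ∈ K, 0 ≤ s.power b) : u' = u := by
  obtain ⟨t, ht, hn, hpower⟩ := h.exists_isOuterNormal_center_sub_smul hs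
  obtain ⟨t', ht', hn', -⟩ := h'.exists_isOuterNormal_center_sub_smul hs
  have hle := hn.inner_le _ hn'.mem
  have hle' := hn'.inner_le _ hn.mem
  simp only [inner_sub_right, inner_smul_right, real_inner_self_of_norm_eq_one hn.norm_eq,
    real_inner_self_of_norm_eq_one hn'.norm_eq, mul_one, real_inner_comm u u',
    sub_le_sub_iff_left] at hle hle'
  have hinner : ⟪u, u'⟫ ≤ 1 := by
    simpa [hn.norm_eq, hn'.norm_eq] using real_inner_le_norm u u'
  obtain rfl : t = t' := le_antisymm (by nlinarith) (by nlinarith)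
  rcases ht.eq_or_lt with rfl | ht
  · rw [zero_smul, sub_zero] at hn hn' hpower
    exact hn.normal_eq_of_power_neg hn' hint hs hpower
  · have hone : ⟪u, u'⟫ = 1 := hinner.antisymm (le_of_mul_le_mul_left (by rwa [mul_one]) ht)
    exact ((inner_eq_one_iff_of_norm_eq_one hn.norm_eq hn'.norm_eq).1 hone).symm

theorem exists_isOuterNormal_add_smul (h : IsExitNormal (convexHull ℝ K) s u)
    (hs : ∀ b ∈ K, 0 ≤ s.power b) (hy : y ∈ interior (convexHull ℝ K)) (hpower : s.power y ≤ 0) :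
    ∃ τ : ℝ, 0 < τ ∧ IsOuterNormal (convexHull ℝ K) (y + τ • u) u ∧
      ⟪u, y + τ • u⟫ ≤ ⟪u, s.center⟫ := by
  obtain ⟨e, he, hpe, hcenter⟩ := h
  have hτ : 0 < ⟪u, e⟫ - ⟪u, y⟫ := sub_pos.2 (he.inner_lt hy)
  have hinner : ⟪u, y + (⟪u, e⟫ - ⟪u, y⟫) • u⟫ = ⟪u, e⟫ := by
    rw [inner_add_smul_of_norm_eq_one he.norm_eq, add_sub_cancel]
  have hcenter' := hinner.trans_le hcenter
  have hneg := power_add_smul_neg he.norm_eq hpower hτ hcenter'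
  exact ⟨_, hτ, he.congr_point (he.mem_of_power_nonpos hs hpe hinner hneg.le) hinner, hcenter'⟩

end IsExitNormal

variable {𝒮 : Set (Sphere E)}

namespace IsEscapeDirection

variable {v : E} {t : ℝ}

theorem exists_isOuterNormal_add_smul (h : IsEscapeDirection (convexHull ℝ K) 𝒮 y u)
    (hs : ∀ s ∈ 𝒮, ∀ b ∈ K, 0 ≤ s.power b)
    (hpower : y ∈ interior (convexHull ℝ K) → ∃ s ∈ 𝒮, s.power y ≤ 0) :
    ∃ τ : ℝ, IsOuterNormal (convexHull ℝ K) (y + τ • u) u ∧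
      (0 < τ → y ∈ interior (convexHull ℝ K) ∧
        ∃ s ∈ 𝒮, IsMinOn (fun s => s.power y) 𝒮 s ∧ s.power y ≤ 0 ∧
          ⟪u, y + τ • u⟫ ≤ ⟪u, s.center⟫) := by
  rcases h with ⟨p, t, ht, rfl, hp⟩ | ⟨hy, s, hs𝒮, hsmin, hexit⟩
  · exact ⟨-t, by rwa [neg_smul, add_neg_cancel_right], fun h => absurd h (by linarith)⟩
  · obtain ⟨s', hs'𝒮, hs'⟩ := hpower hy
    have hsy : s.power y ≤ 0 := (hsmin hs'𝒮).trans hs'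
    obtain ⟨τ, -, hτ, hcenter⟩ := hexit.exists_isOuterNormal_add_smul (hs s hs𝒮) hy hsy
    exact ⟨τ, hτ, fun _ => ⟨hy, s, hs𝒮, hsmin, hsy, hcenter⟩⟩

theorem add_smul_notMem {B : Set E} (h : IsEscapeDirection (convexHull ℝ K) 𝒮 y u)
    (hs : ∀ s ∈ 𝒮, ∀ b ∈ K, 0 ≤ s.power b)
    (hpower : y ∈ interior (convexHull ℝ K) → ∃ s ∈ 𝒮, s.power y ≤ 0)
    (hB : B ⊆ interior (convexHull ℝ K)) (hdisj : ∀ s ∈ 𝒮, ∀ b ∈ B, 0 < s.power b) (ht : 0 < t) :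
    y + t • u ∉ B := by
  intro hmem
  obtain ⟨τ, hτ, hlt⟩ := h.exists_isOuterNormal_add_smul hs hpower
  have hle := hτ.inner_lt (hB hmem)
  simp only [inner_add_smul_of_norm_eq_one h.norm_eq] at hle hlt
  obtain ⟨-, s, hs𝒮, -, hsy, hcenter⟩ := hlt (by linarith)
  refine (hdisj s hs𝒮 _ hmem).not_gt (power_add_smul_neg h.norm_eq hsy ht ?_)
  rw [inner_add_smul_of_norm_eq_one h.norm_eq]
  linarith

theorem eq_of_add_smul (h : IsEscapeDirection (convexHull ℝ K) 𝒮 y u)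
    (hs : ∀ s ∈ 𝒮, ∀ b ∈ K, 0 ≤ s.power b)
    (hpower : y ∈ interior (convexHull ℝ K) → ∃ s ∈ 𝒮, s.power y ≤ 0)
    (hint : (interior (convexHull ℝ K)).Nonempty) (ht : 0 < t)
    (hv : IsEscapeDirection (convexHull ℝ K) 𝒮 (y + t • u) v) : v = u := by
  obtain ⟨τ, hτ, hlt⟩ := h.exists_isOuterNormal_add_smul hs hpower
  rcases lt_or_ge t τ with htτ | htτ
  · obtain ⟨hy, s, hs𝒮, hsmin, hsy, hcenter⟩ := hlt (ht.trans htτ)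
    have hmem := add_smul_mem_interior (convex_convexHull ℝ K) hy hτ.mem ht htτ
    rcases hv with ⟨p, t', ht', heq, hp⟩ | ⟨-, s', hs'𝒮, hs'min, hexit⟩
    · exact absurd (heq ▸ hmem) (hp.add_smul_notMem_interior ht')
    · exact (hτ.isExitNormal_of_power_le ht htτ hsy hcenter (hsmin hs'𝒮) (hs'min hs𝒮)).eq
        hexit hint (hs s' hs'𝒮)
  · rw [show y + t • u = (y + τ • u) + (t - τ) • u by module] at hv
    obtain ⟨hτv, hvu⟩ := hv.eq_of_isOuterNormal_add_smul hτ (sub_nonneg.2 htτ)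
    rcases htτ.lt_or_eq with hτt | rfl
    · exact hvu (sub_pos.2 hτt)
    · obtain ⟨-, s, hs𝒮, -, hsy, hcenter⟩ := hlt ht
      exact hτ.normal_eq_of_power_neg hτv hint (hs s hs𝒮)
        (power_add_smul_neg h.norm_eq hsy ht hcenter)

end IsEscapeDirection

theorem closeToConvex_of_sphere_cover {B : Set E} (hopen : IsOpen B) (hB : Bornology.IsBounded B)
    (hne : B.Nonempty) (hmin : ∀ y, ∃ s ∈ 𝒮, IsMinOn (fun s => s.power y) 𝒮 s)
    (hcover : ∀ y ∈ interior (convexHull ℝ (closure B)), y ∉ B → ∃ s ∈ 𝒮, s.power y ≤ 0)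
    (hdisj : ∀ s ∈ 𝒮, ∀ b ∈ B, 0 < s.power b)
    (hcenter : ∀ s ∈ 𝒮, s.center ∉ interior (convexHull ℝ (closure B))) : CloseToConvex B := by
  have := FiniteDimensional.of_fact_finrank_eq_two (K := ℝ) (V := E)
  have := FiniteDimensional.proper ℝ E
  have hcompact := isCompact_convexHull hB.isCompact_closure
  have hsub : B ⊆ interior (convexHull ℝ (closure B)) :=
    interior_maximal (subset_closure.trans (subset_convexHull ℝ _)) hopen
  have hs : ∀ s ∈ 𝒮, ∀ b ∈ closure B, 0 ≤ s.power b := fun s hs𝒮 b hb =>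
    closure_minimal (fun b hb => (hdisj s hs𝒮 b hb).le)
      (isClosed_Ici.preimage (continuous_power s)) hb
  refine closeToConvex_of_invariant_relation
    (IsEscapeDirection (convexHull ℝ (closure B)) 𝒮) (fun y hy => ?_)
    (fun y u h => norm_ne_zero_iff.1 (h.norm_eq ▸ one_ne_zero)) (fun y hy u h t ht => ⟨?_, ?_⟩)
    fun y u _ => IsEscapeDirection.exists_add_smul_not hcompact.isBounded y u
  · refine exists_isEscapeDirection (convex_convexHull ℝ _) hcompact.isClosed (hne.mono hsub)
      hcenter fun hyM => ?_
    obtain ⟨s, hs𝒮, hsmin⟩ := hmin y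
    obtain ⟨s', hs'𝒮, hs'⟩ := hcover y hyM hy
    exact ⟨s, hs𝒮, hsmin, (hsmin hs'𝒮).trans hs'⟩
  · exact h.add_smul_notMem hs (hcover y · hy) hsub hdisj ht
  · exact fun v hv => h.eq_of_add_smul hs (hcover y · hy) (hne.mono hsub) ht hv

end Plane

/-! ### Distance ratio balls are close-to-convex -/

section Main

variable {E : Type*} [NormedAddCommGroup E] [InnerProductSpace ℝ E] {Z : Set E} {x : E} {R : ℝ}

theorem exists_isMinOn_power_apolloniusSphere [ProperSpace E] (hZ : IsClosed Z)
    (hne : Z.Nonempty) (hR : 1 < R) (y : E) :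
    ∃ s ∈ apolloniusSphere x R '' Z,
      IsMinOn (fun s => s.power y) (apolloniusSphere x R '' Z) s := by
  have hR2 : 0 < R ^ 2 - 1 := by nlinarith
  obtain ⟨z, hz, hdist⟩ := hZ.exists_infDist_eq_dist hne y
  refine ⟨_, mem_image_of_mem _ hz, ?_⟩
  rintro _ ⟨z', hz', rfl⟩
  have hle : dist y z ≤ dist y z' := hdist ▸ infDist_le_dist_of_mem hz'
  refine le_of_mul_le_mul_left ?_ hR2
  rw [mul_power_apolloniusSphere hR, mul_power_apolloniusSphere hR]
  gcongr

theorem inner_le_inner_center_apolloniusSphere (hR : 1 < R) (hR3 : R ^ 2 ≤ 3) {z w : E}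
    (hwx : dist w x ≤ R * dist z x) (hwz : dist w x ≤ R * dist w z) :
    ⟪z - x, w⟫ ≤ ⟪z - x, (apolloniusSphere x R z).center⟫ := by
  have hR2 : 0 < R ^ 2 - 1 := by nlinarith
  rw [dist_eq_norm, dist_eq_norm, ← sq_le_sq₀ (norm_nonneg _) (by positivity), mul_pow]
    at hwx hwz
  rw [← sub_sub_sub_cancel_right w z x, norm_sub_sq_real (w - x)] at hwz
  have hinner : ⟪w - x, z - x⟫ ≤ R ^ 2 / 2 * ‖z - x‖ ^ 2 := by
    refine le_of_mul_le_mul_left ?_ (pow_pos (one_pos.trans hR) 2)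
    nlinarith [mul_le_mul_of_nonneg_left hwx hR2.le]
  -- The bound `√3`: `R ^ 2 / 2 ≤ R ^ 2 / (R ^ 2 - 1)` if and only if `R ^ 2 ≤ 3`.
  have hfactor : R ^ 2 / 2 ≤ R ^ 2 / (R ^ 2 - 1) := by gcongr; linarith
  rw [← sub_le_sub_iff_right ⟪z - x, x⟫, ← inner_sub_right, ← inner_sub_right, real_inner_comm]
  simp only [apolloniusSphere, add_sub_cancel_left, inner_smul_right, real_inner_self_eq_norm_sq]
  exact hinner.trans (by gcongr)

theorem center_apolloniusSphere_notMem_interior (hR : 1 < R) (hR3 : R ^ 2 ≤ 3) {z : E}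
    (hz : z ∈ Z) (hzx : z ≠ x) :
    (apolloniusSphere x R z).center ∉ interior (convexHull ℝ (closure (jRegion Z x R))) := by
  intro hmem
  refine (inner_lt_of_mem_interior (sub_ne_zero.2 hzx) (fun w hw => ?_) hmem).false
  refine convexHull_min (closure_minimal (fun y hy => ?_) ?_)
    (convex_halfSpace_le (innerₛₗ ℝ (z - x)).isLinear _) hw
  · have hyx : dist y x ≤ R * dist z x := (mem_ball.1 hy.1).le.trans <| by
      gcongr
      exact dist_comm z x ▸ infDist_le_dist_of_mem hz
    exact inner_le_inner_center_apolloniusSphere hR hR3 hyx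
      (dist_lt_mul_dist_of_mem_jRegion (by positivity) hy hz).le
  · exact isClosed_le (innerSL ℝ (z - x)).continuous continuous_const

theorem interior_convexHull_closure_jRegion_subset (hpos : 0 < R * infDist x Z) :
    interior (convexHull ℝ (closure (jRegion Z x R))) ⊆ ball x (R * infDist x Z) := by
  rw [← interior_closedBall x hpos.ne']
  exact interior_mono <| convexHull_min
    (closure_minimal (inter_subset_left.trans ball_subset_closedBall) isClosed_closedBall)
    (convex_closedBall _ _)

theorem closeToConvex_jRegion_of_finrank_eq_two (hE : finrank ℝ E = 2) (hZ : IsClosed Z)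
    (hne : Z.Nonempty) (hx : x ∉ Z) (hR : 1 < R) (hR3 : R ^ 2 ≤ 3) :
    CloseToConvex (jRegion Z x R) := by
  have : Fact (finrank ℝ E = 2) := ⟨hE⟩
  have := FiniteDimensional.of_fact_finrank_eq_two (K := ℝ) (V := E)
  have := FiniteDimensional.proper ℝ E
  have hpos : 0 < R * infDist x Z := mul_pos (by positivity) ((hZ.notMem_iff_infDist_pos hne).1 hx)
  refine closeToConvex_of_sphere_cover (𝒮 := apolloniusSphere x R '' Z) isOpen_jRegion
    (isBounded_ball.subset inter_subset_left) ⟨x, self_mem_jRegion hZ hne hx (by positivity)⟩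
    (exists_isMinOn_power_apolloniusSphere hZ hne hR) (fun y hyM hy => ?_) ?_ ?_
  · obtain ⟨z, hz, hdist⟩ := hZ.exists_infDist_eq_dist hne y
    refine ⟨_, mem_image_of_mem _ hz, (power_apolloniusSphere_nonpos_iff hR y z).2 ?_⟩
    exact hdist ▸ mul_infDist_le_of_notMem_jRegion
      (interior_convexHull_closure_jRegion_subset hpos hyM) hy
  · rintro _ ⟨z, hz, rfl⟩ b hb
    refine not_le.1 fun h => ?_
    exact (dist_lt_mul_dist_of_mem_jRegion (by positivity) hb hz).not_ge
      ((power_apolloniusSphere_nonpos_iff hR b z).1 h)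
  · rintro _ ⟨z, hz, rfl⟩
    exact center_apolloniusSphere_notMem_interior hR hR3 hz fun h => hx (h ▸ hz)

theorem jBall_closeToConvex_of_general_domain_general [FiniteDimensional ℝ E]
    (hE : 2 ≤ finrank ℝ E) {G : Set E} (hG : IsOpen G) (hne : G ≠ univ) (hx : x ∈ G) {r : ℝ}
    (hr0 : 0 < r) (hr : r ≤ Real.log (1 + √3)) : CloseToConvex (jBall G x r) := by
  have hR0 : 0 < Real.exp r - 1 := sub_pos.2 (Real.one_lt_exp_iff.2 hr0)
  have hR : Real.exp r - 1 ≤ √3 :=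
    sub_le_iff_le_add'.2 ((Real.le_log_iff_exp_le (by positivity)).1 hr)
  have hR3 : (Real.exp r - 1) ^ 2 ≤ 3 := (Real.le_sqrt' hR0).1 hR
  have hR2 : Real.exp r - 1 < 2 := by nlinarith
  have hZ : (frontier G).Nonempty := nonempty_frontier_iff.2 ⟨⟨x, hx⟩, hne⟩
  have hxZ : x ∉ frontier G := fun h => (hG.frontier_eq ▸ h).2 hx
  rw [jBall_eq_jRegion hG hne hx hr0 hR2.le]
  rcases le_or_gt (Real.exp r - 1) 1 with hR1 | hR1
  · exact closeToConvex_of_starConvex (starConvex_jRegion hR0.le hR1)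
      (self_mem_jRegion isClosed_frontier hZ hxZ hR0)
  rcases hE.eq_or_lt' with hE | hE
  · exact closeToConvex_jRegion_of_finrank_eq_two hE isClosed_frontier hZ hxZ hR1 hR3
  · exact closeToConvex_jRegion_of_three_le_finrank hE isClosed_frontier hZ hxZ hR1 hR2

end Main

/-- Klén, Theorem 1.4 (first part) / Theorem 3.3: for a proper nonempty open connected
subdomain `G ⊊ ℝⁿ`, `n ≥ 2`, `x ∈ G` and `0 < r ≤ log (1 + √3)`, the `j`-metric ball
`B_j(x,r)` is close-to-convex. -/
theorem jBall_closeToConvex_of_general_domain {n : ℕ} (hn : 2 ≤ n)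
    (G : Set (EuclideanSpace ℝ (Fin n))) (hGopen : IsOpen G) (hGconn : IsConnected G)
    (hGproper : G ≠ Set.univ) (x : EuclideanSpace ℝ (Fin n)) (hx : x ∈ G)
    (r : ℝ) (hr0 : 0 < r) (hr : r ≤ Real.log (1 + Real.sqrt 3)) :
    CloseToConvex (jBall G x r) :=
  jBall_closeToConvex_of_general_domain_general (by simpa using hn) hGopen hGproper hx hr0 hr
end

section
/- Let G = ℝ² \ {0}, let x ∈ G and let r > λ. Then the quasihyperbolic disk B_k(x,r) is not close-to-convex. -/
/-- The quasihyperbolic metric of the punctured space `ℝⁿ \ {0}` (Martin–Osgood formula):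
`k(x,y) = √(α² + log²(|x|/|y|))` where `α ∈ [0,π]` is the angle between `[x,0]` and `[0,y]`. -/
noncomputable def qhDist {E : Type*} [NormedAddCommGroup E] [InnerProductSpace ℝ E]
    (x y : E) : ℝ :=
  Real.sqrt ((InnerProductGeometry.angle x y) ^ 2 + (Real.log (‖x‖ / ‖y‖)) ^ 2)

/-- The quasihyperbolic ball `B_k(x,r) = {y ∈ ℝⁿ \ {0} : k(x,y) < r}` of the punctured space. -/
def kBall {E : Type*} [NormedAddCommGroup E] [InnerProductSpace ℝ E] (x : E) (r : ℝ) : Set E :=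
  {y | y ≠ 0 ∧ qhDist x y < r}

/-!
The exponential map carries the Euclidean disk of radius `r` onto the quasihyperbolic disk
`B_k(x, r)`, up to scaling and rotation: a boundary point at distance `exp s * ‖x‖` from the origin
makes the angle `α = √(r² - s²)` with `x`, so its relative height over the axis `ℝx` is
`exp s * sin √(r² - s²)`. At `s = -1` the derivative of this height has the sign of
`cos α + α sin α`, which is negative for `λ < r ≤ π`, so the height grows as `s` decreases from
`-1`; for `r ≥ π` it is `0` at `α = π` and positive closer to the origin, at `α = π / 2`. In both
cases some circle about the origin meets the complement of the disk in a low gap around `-x`, while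
boundary points `p` and `q`, mirror images in the axis, lie inside that circle and higher than the
gap. A half-line of the complement through `p` or `q` can only leave the circle through the gap, so
both run away from `x` and towards the axis. Such half-lines meet, and they cannot be the same one.
-/

open Real InnerProductGeometry Module

section HalfLines

variable {E : Type*}

/-- The closed half-line from `p` in direction `d`, as a set; it is `{p}` for `d = 0`. -/
def closedRay [AddCommGroup E] [Module ℝ E] (p d : E) : Set E :=
  (fun t : ℝ => p + t • d) '' Set.Ici 0

lemma IsHalfLine.exists_closedRay_subset [AddCommGroup E] [Module ℝ E] {S : Set E}
    (hS : IsHalfLine S) : ∃ d : E, d ≠ 0 ∧ ∀ p ∈ S, closedRay p d ⊆ S := by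
  obtain ⟨z, d, hd, rfl | rfl⟩ := hS
  all_goals
    refine ⟨d, hd, ?_⟩
    rintro _ ⟨u, hu, rfl⟩ _ ⟨t, ht : 0 ≤ t, rfl⟩
    exact ⟨u + t, by positivity, by simp only [add_smul, add_assoc]⟩

lemma CloseToConvex.exists_closedRay_subset_compl [AddCommGroup E] [Module ℝ E] {G : Set E}
    (hG : CloseToConvex G) {p q : E} (hp : p ∉ G) (hq : q ∉ G) :
    ∃ d e : E, d ≠ 0 ∧ e ≠ 0 ∧ closedRay p d ⊆ Gᶜ ∧ closedRay q e ⊆ Gᶜ ∧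
      (d = e ∨ Disjoint (closedRay p d) (closedRay q e)) := by
  obtain ⟨𝒞, hhalf, hdisj, hcover⟩ := hG
  have hsub : ∀ S ∈ 𝒞, S ⊆ Gᶜ := fun S hS => hcover ▸ Set.subset_sUnion_of_mem hS
  obtain ⟨S, hS, hpS⟩ : p ∈ ⋃₀ 𝒞 := hcover ▸ hp
  obtain ⟨T, hT, hqT⟩ : q ∈ ⋃₀ 𝒞 := hcover ▸ hq
  obtain ⟨d, hd, hdS⟩ := (hhalf S hS).exists_closedRay_subset
  by_cases hST : S = T
  · subst hST
    exact ⟨d, d, hd, hd, (hdS p hpS).trans (hsub S hS), (hdS q hqT).trans (hsub S hS), .inl rfl⟩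
  · obtain ⟨e, he, heT⟩ := (hhalf T hT).exists_closedRay_subset
    exact ⟨d, e, hd, he, (hdS p hpS).trans (hsub S hS), (heT q hqT).trans (hsub T hT),
      .inr ((hdisj hS hT hST).mono (hdS p hpS) (heT q hqT))⟩

lemma exists_norm_add_smul_eq [NormedAddCommGroup E] [NormedSpace ℝ E] {p d : E} {ρ : ℝ}
    (hd : d ≠ 0) (hp : ‖p‖ < ρ) : ∃ t : ℝ, 0 < t ∧ ‖p + t • d‖ = ρ := by
  have hd' : 0 < ‖d‖ := norm_pos_iff.2 hd
  set T := (‖p‖ + ρ) / ‖d‖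
  have hT : 0 ≤ T := div_nonneg (by linarith [norm_nonneg p]) hd'.le
  have hfar : ρ ≤ ‖p + T • d‖ := by
    have h := norm_sub_le (p + T • d) p
    rw [add_sub_cancel_left, norm_smul, norm_of_nonneg hT, div_mul_cancel₀ _ hd'.ne'] at h
    linarith
  obtain ⟨t, ⟨ht, -⟩, hnorm⟩ := intermediate_value_Icc hT
    (f := fun t : ℝ => ‖p + t • d‖) (by fun_prop) ⟨by simpa using hp.le, hfar⟩
  refine ⟨t, ht.lt_of_ne ?_, hnorm⟩
  rintro rfl
  exact hp.ne (by simpa using hnorm)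

end HalfLines

section BoundaryHeight

/-- The angle with `x` of the boundary points of `B_k(x, r)` at distance `exp s * ‖x‖` from the
origin. There are such points only if `s ^ 2 ≤ r ^ 2` and the angle is at most `π`; for
`r ^ 2 < s ^ 2` the value is `0`. -/
noncomputable def boundaryAngle (r s : ℝ) : ℝ := √(r ^ 2 - s ^ 2)

/-- The distance, in units of `‖x‖`, from the axis `ℝx` to the boundary points of `B_k(x, r)` at
distance `exp s * ‖x‖` from the origin. -/
noncomputable def boundaryHeight (r s : ℝ) : ℝ := exp s * sin (boundaryAngle r s)

lemma boundaryHeight_nonneg {r s : ℝ} (hs : boundaryAngle r s ≤ π) : 0 ≤ boundaryHeight r s :=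
  mul_nonneg (exp_pos s).le (sin_nonneg_of_nonneg_of_le_pi (sqrt_nonneg _) hs)

lemma hasDerivAt_boundaryHeight {r s : ℝ} (hs : s ^ 2 < r ^ 2) :
    HasDerivAt (boundaryHeight r)
      (exp s * (sin (boundaryAngle r s) - s * cos (boundaryAngle r s) / boundaryAngle r s)) s := by
  have hangle : HasDerivAt (boundaryAngle r) (-s / boundaryAngle r s) s := by
    refine (((hasDerivAt_pow 2 s).const_sub (r ^ 2)).sqrt (sub_pos.2 hs).ne').congr_deriv ?_
    simp only [boundaryAngle]
    ring
  exact ((hasDerivAt_exp s).mul hangle.sin).congr_deriv (by ring)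

lemma strictAntiOn_cos_add_mul_sin :
    StrictAntiOn (fun u : ℝ => cos u + u * sin u) (Set.Icc (π / 2) π) := by
  refine strictAntiOn_of_deriv_neg (convex_Icc _ _) (by fun_prop) fun u hu => ?_
  rw [interior_Icc] at hu
  have hderiv : HasDerivAt (fun u : ℝ => cos u + u * sin u) (u * cos u) u :=
    ((hasDerivAt_cos u).add ((hasDerivAt_id' u).mul (hasDerivAt_sin u))).congr_deriv (by ring)
  rw [hderiv.deriv]
  exact mul_neg_of_pos_of_neg (pi_div_two_pos.trans hu.1)
    (cos_neg_of_pi_div_two_lt_of_lt hu.1 (by linarith [hu.2, pi_pos]))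

lemma pi_div_two_le_of_cos_add_mul_sin_eq_zero {u : ℝ} (hu : 0 ≤ u)
    (hroot : cos u + u * sin u = 0) : π / 2 ≤ u := by
  by_contra! hlt
  have hcos : 0 < cos u := cos_pos_of_mem_Ioo ⟨by linarith [pi_pos], hlt⟩
  have hsin : 0 ≤ sin u := sin_nonneg_of_nonneg_of_le_pi hu (by linarith [pi_pos])
  linarith [mul_nonneg hu hsin]

lemma exists_lt_lt_of_hasDerivAt_neg {f : ℝ → ℝ} {f' a : ℝ} (hf : HasDerivAt f f' a)
    (hf' : f' < 0) : ∃ b < a, f a < f b := by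
  have hslope := (hasDerivAt_iff_tendsto_slope_left_right.1 hf).1.eventually (gt_mem_nhds hf')
  obtain ⟨b, hneg, hb : b < a⟩ := (hslope.and self_mem_nhdsWithin).exists
  rw [slope_def_field, div_neg_iff] at hneg
  exact ⟨b, hb, by rcases hneg with h | h <;> linarith⟩

lemma exists_boundaryHeight_lt_of_pi_le {r : ℝ} (hr : π ≤ r) :
    ∃ s₁ s₂ : ℝ, s₂ < s₁ ∧ boundaryAngle r s₁ ∈ Set.Icc (π / 2) π ∧ boundaryAngle r s₂ ≤ π ∧
      boundaryHeight r s₁ < boundaryHeight r s₂ := by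
  have hangle : ∀ α, 0 ≤ α → α ≤ π → boundaryAngle r (-√(r ^ 2 - α ^ 2)) = α := fun α h0 hπ => by
    rw [boundaryAngle, neg_sq, sq_sqrt (by nlinarith), sub_sub_cancel, sqrt_sq h0]
  have hπ := hangle π pi_pos.le le_rfl
  have hhalf := hangle (π / 2) pi_div_two_pos.le (by linarith [pi_pos])
  refine ⟨-√(r ^ 2 - π ^ 2), -√(r ^ 2 - (π / 2) ^ 2),
    neg_lt_neg (sqrt_lt_sqrt (by nlinarith [pi_pos]) (by nlinarith [pi_pos])), ?_, ?_, ?_⟩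
  · exact ⟨by linarith [pi_pos], hπ.le⟩
  · linarith [pi_pos]
  · simp only [boundaryHeight, hπ, hhalf, sin_pi, sin_pi_div_two, mul_zero, mul_one, exp_pos]

lemma exists_boundaryHeight_lt_of_le_pi {lam r : ℝ} (hlam : 0 < lam)
    (hroot : cos √(lam ^ 2 - 1) + √(lam ^ 2 - 1) * sin √(lam ^ 2 - 1) = 0)
    (hr : lam < r) (hrπ : r ≤ π) :
    ∃ s₁ s₂ : ℝ, s₂ < s₁ ∧ boundaryAngle r s₁ ∈ Set.Icc (π / 2) π ∧ boundaryAngle r s₂ ≤ π ∧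
      boundaryHeight r s₁ < boundaryHeight r s₂ := by
  have hangle_le : ∀ s, boundaryAngle r s ≤ π := fun s =>
    (sqrt_le_left pi_pos.le).2 (by nlinarith [sq_nonneg s])
  have hlam_angle : π / 2 ≤ √(lam ^ 2 - 1) :=
    pi_div_two_le_of_cos_add_mul_sin_eq_zero (sqrt_nonneg _) hroot
  have hlam_sq : 0 < lam ^ 2 - 1 := sqrt_pos.1 (pi_div_two_pos.trans_le hlam_angle)
  set α := boundaryAngle r (-1) with hα
  have hlt : √(lam ^ 2 - 1) < α := by
    rw [hα, boundaryAngle, neg_one_sq]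
    exact sqrt_lt_sqrt hlam_sq.le (by nlinarith)
  have hα_mem : α ∈ Set.Icc (π / 2) π := ⟨hlam_angle.trans hlt.le, hangle_le _⟩
  have hneg : cos α + α * sin α < 0 := by
    simpa only [hroot] using
      strictAntiOn_cos_add_mul_sin ⟨hlam_angle, hlt.le.trans hα_mem.2⟩ hα_mem hlt
  have hα_pos : 0 < α := pi_div_two_pos.trans_le hα_mem.1
  have hderiv_neg : exp (-1) * (sin α - -1 * cos α / α) < 0 := by
    have hfactor : sin α - -1 * cos α / α = (cos α + α * sin α) / α := by field_simp; ring
    rw [hfactor]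
    exact mul_neg_of_pos_of_neg (exp_pos _) (div_neg_of_neg_of_pos hneg hα_pos)
  obtain ⟨s, hs, hheight⟩ := exists_lt_lt_of_hasDerivAt_neg
    (hasDerivAt_boundaryHeight (by nlinarith)) hderiv_neg
  exact ⟨-1, s, hs, hα_mem, hangle_le s, hheight⟩

end BoundaryHeight

lemma notMem_kBall_iff {E : Type*} [NormedAddCommGroup E] [InnerProductSpace ℝ E] {x q : E}
    {r s : ℝ} (hx : x ≠ 0) (hr : 0 ≤ r) (hq : ‖q‖ = exp s * ‖x‖) :
    q ∉ kBall x r ↔ boundaryAngle r s ≤ angle x q := by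
  have hx' : 0 < ‖x‖ := norm_pos_iff.2 hx
  have hq0 : q ≠ 0 := norm_pos_iff.1 (hq ▸ by positivity)
  have hlog : log (‖x‖ / ‖q‖) = -s := by
    rw [hq, div_mul_cancel_right₀ hx'.ne', log_inv, log_exp]
  calc q ∉ kBall x r ↔ r ≤ qhDist x q := by simp [kBall, hq0]
    _ ↔ r ^ 2 - s ^ 2 ≤ angle x q ^ 2 := by
      rw [qhDist, hlog, neg_sq, le_sqrt hr (by positivity), sub_le_iff_le_add]
    _ ↔ boundaryAngle r s ≤ angle x q := (sqrt_le_left (angle_nonneg x q)).symm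

section OrientedPlane

variable {E : Type*} [NormedAddCommGroup E] [InnerProductSpace ℝ E] [Fact (finrank ℝ E = 2)]
  (o : Orientation ℝ E (Fin 2))

lemma abs_areaForm_eq_sin_angle_mul (x y : E) :
    |o.areaForm x y| = sin (angle x y) * (‖x‖ * ‖y‖) := by
  rw [sin_angle_mul_norm_mul_norm, ← sqrt_sq_eq_abs, real_inner_self_eq_norm_sq,
    real_inner_self_eq_norm_sq, ← o.inner_sq_add_areaForm_sq]
  congr 1
  ring

lemma eq_of_inner_eq_of_areaForm_eq {x p q : E} (hx : x ≠ 0) (hinner : inner ℝ x p = inner ℝ x q)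
    (harea : o.areaForm x p = o.areaForm x q) : p = q := by
  have h : o.kahler x (p - q) = 0 := by
    rw [map_sub, o.kahler_apply_apply, o.kahler_apply_apply, hinner, harea, sub_self]
  exact sub_eq_zero.1 ((o.eq_zero_or_eq_zero_of_kahler_eq_zero h).resolve_left hx)

/-- The point with polar coordinates `exp s * ‖x‖` and `θ`, angles being measured from `x`. -/
noncomputable def polarPoint (x : E) (s : ℝ) (θ : Angle) : E := exp s • o.rotation θ x

lemma norm_polarPoint (x : E) (s : ℝ) (θ : Angle) : ‖polarPoint o x s θ‖ = exp s * ‖x‖ := by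
  rw [polarPoint, norm_smul, norm_of_nonneg (exp_pos s).le, LinearIsometryEquiv.norm_map]

lemma inner_polarPoint (x : E) (s : ℝ) (θ : Angle) :
    inner ℝ x (polarPoint o x s θ) = ‖x‖ ^ 2 * (exp s * θ.cos) := by
  rw [polarPoint, o.rotation_apply, inner_smul_right, inner_add_right, inner_smul_right,
    inner_smul_right, o.inner_rightAngleRotation_right, o.areaForm_apply_self,
    real_inner_self_eq_norm_sq]
  ring

lemma areaForm_polarPoint (x : E) (s : ℝ) (θ : Angle) :
    o.areaForm x (polarPoint o x s θ) = ‖x‖ ^ 2 * (exp s * θ.sin) := by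
  rw [polarPoint, o.rotation_apply, map_smul, map_add, map_smul, map_smul, o.areaForm_apply_self,
    o.areaForm_rightAngleRotation_right, real_inner_self_eq_norm_sq]
  simp only [smul_eq_mul]
  ring

lemma angle_polarPoint {x : E} (hx : x ≠ 0) (s : ℝ) (θ : Angle) :
    angle x (polarPoint o x s θ) = |θ.toReal| := by
  have hrot : o.rotation θ x ≠ 0 := by simpa using hx
  rw [polarPoint, angle_smul_right_of_pos _ _ (exp_pos s), o.angle_eq_abs_oangle_toReal hx hrot,
    o.oangle_rotation_self_right hx]

lemma polarPoint_notMem_kBall {x : E} {r s : ℝ} {θ : Angle} (hx : x ≠ 0) (hr : 0 ≤ r)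
    (hθ : |θ.toReal| = boundaryAngle r s) : polarPoint o x s θ ∉ kBall x r := by
  rw [notMem_kBall_iff hx hr (norm_polarPoint o x s θ), angle_polarPoint o hx, hθ]

lemma exists_mirror_notMem_kBall {x : E} {r s : ℝ} (hx : x ≠ 0) (hr : 0 ≤ r)
    (hs : boundaryAngle r s ≤ π) :
    ∃ p q : E, p ∉ kBall x r ∧ q ∉ kBall x r ∧ ‖p‖ = exp s * ‖x‖ ∧ ‖q‖ = exp s * ‖x‖ ∧
      inner ℝ x p = inner ℝ x q ∧ o.areaForm x p = ‖x‖ ^ 2 * boundaryHeight r s ∧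
      o.areaForm x q = -(‖x‖ ^ 2 * boundaryHeight r s) := by
  have hα : 0 ≤ boundaryAngle r s ∧ boundaryAngle r s ≤ π := ⟨sqrt_nonneg _, hs⟩
  refine ⟨polarPoint o x s (boundaryAngle r s), polarPoint o x s (-boundaryAngle r s),
    polarPoint_notMem_kBall o hx hr (Angle.abs_toReal_coe_eq_self_iff.2 hα),
    polarPoint_notMem_kBall o hx hr (Angle.abs_toReal_neg_coe_eq_self_iff.2 hα),
    norm_polarPoint .., norm_polarPoint .., ?_, ?_, ?_⟩
  · rw [inner_polarPoint, inner_polarPoint, Angle.cos_neg]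
  · rw [areaForm_polarPoint, Angle.sin_coe, boundaryHeight]
  · rw [areaForm_polarPoint, Angle.sin_neg, Angle.sin_coe, mul_neg, mul_neg, boundaryHeight]

lemma inner_nonpos_and_abs_areaForm_le_of_notMem_kBall {x q : E} {r s : ℝ} (hx : x ≠ 0)
    (hr : 0 ≤ r) (hs : boundaryAngle r s ∈ Set.Icc (π / 2) π) (hq : ‖q‖ = exp s * ‖x‖)
    (hmem : q ∉ kBall x r) :
    inner ℝ x q ≤ 0 ∧ |o.areaForm x q| ≤ ‖x‖ ^ 2 * boundaryHeight r s := by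
  have hangle := (notMem_kBall_iff hx hr hq).1 hmem
  have hπ := angle_le_pi x q
  constructor
  · rw [← cos_angle_mul_norm_mul_norm]
    exact mul_nonpos_of_nonpos_of_nonneg
      (cos_nonpos_of_pi_div_two_le_of_le (hs.1.trans hangle) (by linarith [pi_pos])) (by positivity)
  · have hsin : sin (angle x q) ≤ sin (boundaryAngle r s) := by
      rw [← sin_pi_sub (angle x q), ← sin_pi_sub (boundaryAngle r s)]
      exact sin_le_sin_of_le_of_le_pi_div_two (by linarith [pi_pos]) (by linarith [hs.1])
        (by linarith)
    calc |o.areaForm x q| = ‖x‖ ^ 2 * (exp s * sin (angle x q)) := by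
          rw [abs_areaForm_eq_sin_angle_mul, hq]; ring
      _ ≤ ‖x‖ ^ 2 * boundaryHeight r s := by unfold boundaryHeight; gcongr

lemma inner_lt_inner_of_abs_areaForm_lt {x p q : E} (hnorm : ‖p‖ ≤ ‖q‖) (hq : inner ℝ x q ≤ 0)
    (harea : |o.areaForm x q| < |o.areaForm x p|) : inner ℝ x q < inner ℝ x p := by
  have hsq : inner ℝ x p ^ 2 < inner ℝ x q ^ 2 := by
    have hle : ‖x‖ ^ 2 * ‖p‖ ^ 2 ≤ ‖x‖ ^ 2 * ‖q‖ ^ 2 := by gcongr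
    linarith [sq_lt_sq.2 harea, o.inner_sq_add_areaForm_sq x p, o.inner_sq_add_areaForm_sq x q]
  have habs := sq_lt_sq.1 hsq
  rw [abs_of_nonpos hq] at habs
  linarith [(abs_lt.1 habs).1]

lemma inner_neg_and_areaForm_mul_neg_of_closedRay_subset {x p d : E} {r s : ℝ} (hx : x ≠ 0)
    (hr : 0 ≤ r) (hs : boundaryAngle r s ∈ Set.Icc (π / 2) π) (hd : d ≠ 0)
    (hp : ‖p‖ < exp s * ‖x‖)
    (hheight : ‖x‖ ^ 2 * boundaryHeight r s < |o.areaForm x p|)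
    (hray : closedRay p d ⊆ (kBall x r)ᶜ) :
    inner ℝ x d < 0 ∧ o.areaForm x p * o.areaForm x d < 0 := by
  obtain ⟨t, ht, hnorm⟩ := exists_norm_add_smul_eq hd hp
  obtain ⟨hinner, hgap⟩ := inner_nonpos_and_abs_areaForm_le_of_notMem_kBall o hx hr hs hnorm
    (hray ⟨t, ht.le, rfl⟩)
  have harea := hgap.trans_lt hheight
  constructor
  · have hlt := inner_lt_inner_of_abs_areaForm_lt o (hnorm ▸ hp.le) hinner harea
    rw [inner_add_right, inner_smul_right, add_lt_iff_neg_left] at hlt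
    exact neg_of_mul_neg_right hlt ht.le
  · have hsq := sq_lt_sq.2 harea
    rw [map_add, map_smul, smul_eq_mul] at hsq
    by_contra! hnonneg
    nlinarith [mul_nonneg ht.le hnonneg, sq_nonneg (t * o.areaForm x d)]

lemma not_disjoint_closedRay {x p q d e : E} (hx : x ≠ 0) (hinner : inner ℝ x p = inner ℝ x q)
    (harea : o.areaForm x q ≤ o.areaForm x p) (hd : inner ℝ x d < 0) (hd' : o.areaForm x d < 0)
    (he : inner ℝ x e < 0) (he' : 0 < o.areaForm x e) :
    ¬ Disjoint (closedRay p d) (closedRay q e) := by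
  set D := inner ℝ x e * o.areaForm x d - inner ℝ x d * o.areaForm x e
  have hD : 0 < D := by
    linarith [mul_pos_of_neg_of_neg he hd', mul_neg_of_neg_of_pos hd he']
  set c := (o.areaForm x p - o.areaForm x q) / D
  have hc : 0 ≤ c := div_nonneg (sub_nonneg.2 harea) hD.le
  have hcD : c * D = o.areaForm x p - o.areaForm x q := div_mul_cancel₀ _ hD.ne'
  have hmeet : q + (c * -inner ℝ x d) • e = p + (c * -inner ℝ x e) • d := by
    refine eq_of_inner_eq_of_areaForm_eq o hx ?_ ?_
    · simp only [inner_add_right, inner_smul_right, hinner]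
      ring
    · simp only [map_add, map_smul, smul_eq_mul]
      linear_combination hcD
  exact Set.not_disjoint_iff.2 ⟨_, ⟨_, mul_nonneg hc (neg_nonneg.2 he.le), rfl⟩,
    ⟨_, mul_nonneg hc (neg_nonneg.2 hd.le), hmeet⟩⟩

lemma not_closeToConvex_kBall_of_boundaryHeight_lt {x : E} {r s₁ s₂ : ℝ} (hx : x ≠ 0)
    (hr : 0 ≤ r) (hs : s₂ < s₁) (hs₁ : boundaryAngle r s₁ ∈ Set.Icc (π / 2) π)
    (hs₂ : boundaryAngle r s₂ ≤ π) (hheight : boundaryHeight r s₁ < boundaryHeight r s₂) :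
    ¬ CloseToConvex (kBall x r) := by
  intro hG
  have : FiniteDimensional ℝ E := .of_fact_finrank_eq_two
  let o : Orientation ℝ E (Fin 2) := (finBasisOfFinrankEq ℝ E Fact.out).orientation
  obtain ⟨p, q, hp, hq, hp_norm, hq_norm, hinner, hp_area, hq_area⟩ :=
    exists_mirror_notMem_kBall o hx hr hs₂
  obtain ⟨d, e, hd, he, hpd, hqe, hde⟩ := hG.exists_closedRay_subset_compl hp hq
  have hnonneg : 0 ≤ boundaryHeight r s₁ := boundaryHeight_nonneg hs₁.2
  have hhigh : ‖x‖ ^ 2 * boundaryHeight r s₁ < ‖x‖ ^ 2 * boundaryHeight r s₂ := by gcongr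
  have hpos : 0 < ‖x‖ ^ 2 * boundaryHeight r s₂ := mul_pos (by positivity) (by linarith)
  have hcircle : exp s₂ * ‖x‖ < exp s₁ * ‖x‖ := by gcongr
  obtain ⟨hd_back, hpd_axis⟩ := inner_neg_and_areaForm_mul_neg_of_closedRay_subset o hx hr hs₁ hd
    (hp_norm ▸ hcircle) (by rwa [hp_area, abs_of_pos hpos]) hpd
  obtain ⟨he_back, hqe_axis⟩ := inner_neg_and_areaForm_mul_neg_of_closedRay_subset o hx hr hs₁ he
    (hq_norm ▸ hcircle) (by rwa [hq_area, abs_neg, abs_of_pos hpos]) hqe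
  have hd_down : o.areaForm x d < 0 := neg_of_mul_neg_right (hp_area ▸ hpd_axis) hpos.le
  have he_up : 0 < o.areaForm x e := pos_of_mul_neg_right (hq_area ▸ hqe_axis) (by linarith)
  rcases hde with rfl | hdisj
  · exact lt_asymm hd_down he_up
  · exact not_disjoint_closedRay o hx hinner (by linarith) hd_back hd_down he_back he_up hdisj

end OrientedPlane

theorem kBall_not_closeToConvex_of_puncturedPlane_general {E : Type*} [NormedAddCommGroup E]
    [InnerProductSpace ℝ E] [Fact (finrank ℝ E = 2)] {lam : ℝ} (hlam : 0 < lam)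
    (hroot : cos √(lam ^ 2 - 1) + √(lam ^ 2 - 1) * sin √(lam ^ 2 - 1) = 0)
    {x : E} (hx : x ≠ 0) {r : ℝ} (hr : lam < r) : ¬ CloseToConvex (kBall x r) := by
  obtain ⟨s₁, s₂, hs, hs₁, hs₂, hheight⟩ := (le_total π r).elim exists_boundaryHeight_lt_of_pi_le
    (exists_boundaryHeight_lt_of_le_pi hlam hroot hr)
  exact not_closeToConvex_kBall_of_boundaryHeight_lt hx (hlam.trans hr).le hs hs₁ hs₂ hheight

/-- Klén, Theorem 3.2 (sharpness): in the punctured plane `G = ℝ² \ {0}`, for `x ∈ G` and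
`r > λ`, where `λ ∈ (2,π)` solves `cos √(z²-1) + √(z²-1) sin √(z²-1) = 0`,
the quasihyperbolic disk `B_k(x,r)` is not close-to-convex. -/
theorem kBall_not_closeToConvex_of_puncturedPlane
    (lam : ℝ) (hlam : lam ∈ Set.Ioo 2 Real.pi)
    (hlam0 : Real.cos (Real.sqrt (lam ^ 2 - 1))
      + Real.sqrt (lam ^ 2 - 1) * Real.sin (Real.sqrt (lam ^ 2 - 1)) = 0)
    (x : EuclideanSpace ℝ (Fin 2)) (hx : x ≠ 0)
    (r : ℝ) (hr : lam < r) :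
    ¬ CloseToConvex (kBall x r) := by
  have : Fact (finrank ℝ (EuclideanSpace ℝ (Fin 2)) = 2) := ⟨finrank_euclideanSpace_fin⟩
  exact kBall_not_closeToConvex_of_puncturedPlane_general (two_pos.trans hlam.1) hlam0 hx hr
end
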